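/- cap_p T = cap_p^F T, where cap_p^F T := inf_{ρ ∈ F} ∫_T ρ^p dμ and F is the collection of all nonnegative Borel functions ρ on T for which ρ ∘ π is a p-weak upper gradient of some f ∈ N^{1,p}_loc(T̃) with f ∘ τ − f = 1 almost everywhere. -/

import Mathlib

open MeasureTheory Metric Set Filter Topology
open scoped ENNReal NNReal unitInterval

noncomputable section

namespace Duality

/-! ### Rectifiable curves, line integrals and upper gradients

A rectifiable path is encoded by its arclength-type parametrization: a `1`-Lipschitz
map defined on a compact interval `[a, b]`.  The line integral `∫_γ ρ ds` of a
nonnegative Borel function is then the Lebesgue integral of `ρ ∘ γ` over `[a, b]`. -/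

structure UPath (X : Type*) [PseudoMetricSpace X] where
  a : ℝ
  b : ℝ
  hab : a ≤ b
  toFun : ℝ → X
  lip : LipschitzOnWith 1 toFun (Set.Icc a b)

namespace UPath

variable {X : Type*} [PseudoMetricSpace X]

/-- starting point of the path -/
def start (γ : UPath X) : X := γ.toFun γ.a

/-- end point of the path -/
def finish (γ : UPath X) : X := γ.toFun γ.b

/-- The line integral `∫_γ ρ ds`. -/
def integral (γ : UPath X) (ρ : X → ℝ≥0∞) : ℝ≥0∞ :=
  ∫⁻ t in Set.Icc γ.a γ.b, ρ (γ.toFun t)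

/-- The image (trace) `|γ|` of the path. -/
def trace (γ : UPath X) : Set X := γ.toFun '' Set.Icc γ.a γ.b

/-- The length of the path. -/
def length (γ : UPath X) : ℝ≥0∞ := eVariationOn γ.toFun (Set.Icc γ.a γ.b)

/-- The path stays inside the set `W`. -/
def InSet (γ : UPath X) (W : Set X) : Prop := ∀ t ∈ Set.Icc γ.a γ.b, γ.toFun t ∈ W

/-- The reparametrization of a rectifiable path as a `Path` (continuous map from `[0,1]`). -/
def toPath (γ : UPath X) : Path γ.start γ.finish where
  toFun := fun t => γ.toFun (γ.a + (t : ℝ) * (γ.b - γ.a))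
  continuous_toFun := by
    have hmem : ∀ t : unitInterval, γ.a + (t : ℝ) * (γ.b - γ.a) ∈ Set.Icc γ.a γ.b := by
      intro t
      obtain ⟨ht0, ht1⟩ := t.2
      constructor
      · nlinarith [γ.hab]
      · nlinarith [γ.hab]
    exact γ.lip.continuousOn.comp_continuous (by continuity) hmem
  source' := by simp [start]
  target' := by simp [finish]

end UPath

/-- `ρ` is an upper gradient of `u`. -/
def IsUpperGradient {X : Type*} [PseudoMetricSpace X] {Y : Type*} [PseudoEMetricSpace Y]
    (u : X → Y) (ρ : X → ℝ≥0∞) : Prop :=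
  ∀ γ : UPath X, edist (u γ.start) (u γ.finish) ≤ γ.integral ρ

/-- The `p`-modulus of a family of (rectifiable) paths. -/
def pathMod {X : Type*} [PseudoMetricSpace X] [MeasurableSpace X]
    (μ : Measure X) (p : ℝ) (Γ : Set (UPath X)) : ℝ≥0∞ :=
  ⨅ (ρ : X → ℝ≥0∞) (_ : Measurable ρ ∧ ∀ γ ∈ Γ, 1 ≤ γ.integral ρ),
    ∫⁻ x, ρ x ^ p ∂μ

/-- `ρ` is a `p`-weak upper gradient of `u`: the upper gradient inequality may fail
only on a path family of zero `p`-modulus. -/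
def IsWeakUpperGradient {X : Type*} [PseudoMetricSpace X] [MeasurableSpace X]
    {Y : Type*} [PseudoEMetricSpace Y] (μ : Measure X) (p : ℝ)
    (u : X → Y) (ρ : X → ℝ≥0∞) : Prop :=
  pathMod μ p {γ : UPath X | ¬ edist (u γ.start) (u γ.finish) ≤ γ.integral ρ} = 0

/-- `ρ` is a `p`-weak upper gradient of `u` in the subset `U`. -/
def IsWeakUpperGradientOn {X : Type*} [PseudoMetricSpace X] [MeasurableSpace X]
    {Y : Type*} [PseudoEMetricSpace Y] (μ : Measure X) (p : ℝ) (U : Set X)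
    (u : X → Y) (ρ : X → ℝ≥0∞) : Prop :=
  pathMod (μ.restrict U) p
    {γ : UPath X | γ.InSet U ∧ ¬ edist (u γ.start) (u γ.finish) ≤ γ.integral ρ} = 0

/-- `ρ` is the minimal `p`-weak upper gradient of `u`: it is a `p`-integrable `p`-weak
upper gradient which is `μ`-a.e. dominated by every other one. -/
def IsMinimalWeakUpperGradient {X : Type*} [PseudoMetricSpace X] [MeasurableSpace X]
    {Y : Type*} [PseudoEMetricSpace Y] (μ : Measure X) (p : ℝ)
    (u : X → Y) (ρ : X → ℝ≥0∞) : Prop :=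
  Measurable ρ ∧ IsWeakUpperGradient μ p u ρ ∧ (∫⁻ x, ρ x ^ p ∂μ) < ⊤ ∧
    ∀ ρ' : X → ℝ≥0∞, Measurable ρ' → IsWeakUpperGradient μ p u ρ' →
      (∫⁻ x, ρ' x ^ p ∂μ) < ⊤ → ∀ᵐ x ∂μ, ρ x ≤ ρ' x

/-! ### Doubling measures, Poincaré inequalities, Ahlfors regularity -/

/-- `μ` is a doubling (Borel) measure with doubling constant `Cμ`:
`0 < μ(2B) ≤ Cμ · μ(B) < ∞` for every ball `B` of radius `r < diam T`. -/
def IsDoubling {X : Type*} [MetricSpace X] [MeasurableSpace X]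
    (μ : Measure X) (Cμ : ℝ≥0∞) : Prop :=
  ∀ (x : X) (r : ℝ), 0 < r → r < Metric.diam (Set.univ : Set X) →
    0 < μ (ball x (2 * r)) ∧ μ (ball x (2 * r)) ≤ Cμ * μ (ball x r) ∧
      Cμ * μ (ball x r) < ⊤

/-- `(X, d, μ)` supports a weak `1`-Poincaré inequality with constants `CP`, `lP`:
`⨍_B |u - u_B| dμ ≤ CP · diam B · ⨍_{lP·B} ρ dμ` for every locally integrable `u`
and every upper gradient `ρ` of `u`, and balls have positive finite measure. -/
def SupportsPoincare {X : Type*} [MetricSpace X] [MeasurableSpace X]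
    (μ : Measure X) (CP lP : ℝ) : Prop :=
  (∀ (x : X) (r : ℝ), 0 < r → 0 < μ (ball x r) ∧ μ (ball x r) < ⊤) ∧
  ∀ (u : X → ℝ) (ρ : X → ℝ≥0∞), LocallyIntegrable u μ → Measurable ρ →
    IsUpperGradient u ρ → ∀ (x : X) (r : ℝ), 0 < r →
      (∫⁻ y in ball x r, ENNReal.ofReal |u y - ⨍ z in ball x r, u z ∂μ| ∂μ) /
          μ (ball x r) ≤
        ENNReal.ofReal (CP * Metric.diam (ball x r)) *
          ((∫⁻ y in ball x (lP * r), ρ y ∂μ) / μ (ball x (lP * r)))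

/-- `μ` is Ahlfors `q`-regular with constants `0 < aA ≤ AA`. -/
def IsAhlforsRegular {X : Type*} [MetricSpace X] [MeasurableSpace X]
    (μ : Measure X) (q aA AA : ℝ) : Prop :=
  0 < aA ∧ aA ≤ AA ∧
    ∀ (x : X) (r : ℝ), 0 < r → r < Metric.diam (Set.univ : Set X) →
      ENNReal.ofReal (aA * r ^ q) ≤ μ (ball x r) ∧
        μ (ball x r) ≤ ENNReal.ofReal (AA * r ^ q)

/-! ### The circle `ℝ/ℤ`, loops and degree -/

lemma intCast_coe_eq_zero (k : ℤ) : ((k : ℝ) : UnitAddCircle) = 0 :=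
  (AddCircle.coe_eq_zero_iff _).mpr ⟨k, by simp⟩

/-- The standard loop of degree `k` in `ℝ/ℤ` based at `y`: `t ↦ y + [k t]`. -/
def stdLoop (k : ℤ) (y : UnitAddCircle) : Path y y where
  toFun := fun t => y + (((k : ℝ) * (t : ℝ) : ℝ) : UnitAddCircle)
  continuous_toFun := by
    refine continuous_const.add ?_
    exact (AddCircle.continuous_mk' 1).comp (by continuity)
  source' := by simp
  target' := by
    have h1 : ((1 : unitInterval) : ℝ) = 1 := rfl
    have h : (((k : ℝ) * ((1 : unitInterval) : ℝ) : ℝ) : UnitAddCircle) = 0 := by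
      rw [h1, mul_one]; exact intCast_coe_eq_zero k
    simp [h]

/-- Concatenation of `n` copies of a loop. -/
def loopPow {X : Type*} [TopologicalSpace X] {x : X} (γ : Path x x) : ℕ → Path x x
  | 0 => Path.refl x
  | n + 1 => (loopPow γ n).trans γ

/-- A loop `γ` based at `x` has degree 1 (relative to the chosen generator `α₀` based
at `x₀`) if it is loop-homotopic to a conjugate `η * α₀ * η⁻¹` of `α₀`. -/
def IsDegreeOneLoop {T : Type*} [TopologicalSpace T] (x₀ : T) (α₀ : Path x₀ x₀)
    {x : T} (γ : Path x x) : Prop :=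
  ∃ η : Path x x₀, Path.Homotopic γ (η.trans (α₀.trans η.symm))

/-- A map `f : T → ℝ/ℤ` has degree `k`: it pushes every degree-1 loop based at `x`
to a loop which is loop-homotopic to `[f x] + k·β`, `β (t) = [t]`. -/
def HasDegree {T : Type*} [TopologicalSpace T] (x₀ : T) (α₀ : Path x₀ x₀)
    (f : T → UnitAddCircle) (k : ℤ) : Prop :=
  ∃ hf : Continuous f, ∀ (x : T) (γ : Path x x), IsDegreeOneLoop x₀ α₀ γ →
    Path.Homotopic (γ.map hf) (stdLoop k (f x))

/-- The class of `α₀` generates `π₁(T, x₀) ≅ ℤ`. -/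
def IsGenerator {T : Type*} [TopologicalSpace T] (x₀ : T) (α₀ : Path x₀ x₀) : Prop :=
  Function.Bijective fun k : ℤ =>
    (FundamentalGroup.fromPath (X := TopCat.of T) ⟦α₀⟧ : FundamentalGroup (TopCat.of T) x₀) ^ k

/-- `T` is semilocally simply connected. -/
def SemilocallySimplyConnected (T : Type*) [TopologicalSpace T] : Prop :=
  ∀ x : T, ∃ U ∈ 𝓝 x, ∀ γ : Path x x, (∀ t, γ t ∈ U) → Path.Homotopic γ (Path.refl x)

/-- `f` is a Lipschitz map of degree 1. -/
def DegOneLip {T : Type*} [MetricSpace T] (x₀ : T) (α₀ : Path x₀ x₀)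
    (f : T → UnitAddCircle) : Prop :=
  (∃ L : ℝ≥0, LipschitzWith L f) ∧ HasDegree x₀ α₀ f 1

/-! ### Capacity and surface modulus -/

/-- The degree 1 `p`-capacity of `T`, defined through minimal `p`-weak upper gradients:
the infimum of `∫ ρ^p dμ` over `p`-weak upper gradients `ρ` of Lipschitz degree-1 maps. -/
def cap {T : Type*} [MetricSpace T] [MeasurableSpace T] (μ : Measure T) (p : ℝ)
    (x₀ : T) (α₀ : Path x₀ x₀) : ℝ≥0∞ :=
  ⨅ (f : T → UnitAddCircle) (_ : DegOneLip x₀ α₀ f) (ρ : T → ℝ≥0∞)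
    (_ : Measurable ρ ∧ IsWeakUpperGradient μ p f ρ),
      ∫⁻ x, ρ x ^ p ∂μ

/-- The pointwise Lipschitz constant `Lip f (x)`. -/
def pLip {T : Type*} [MetricSpace T] (f : T → UnitAddCircle) (x : T) : ℝ≥0∞ :=
  Filter.limsup
    (fun r : ℝ => ⨆ y ∈ ball x r, edist (f x) (f y) / ENNReal.ofReal r) (𝓝[>] (0 : ℝ))

/-- The degree 1 `p`-capacity of `T`, defined through pointwise Lipschitz constants. -/
def capLip {T : Type*} [MetricSpace T] [MeasurableSpace T] (μ : Measure T) (p : ℝ)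
    (x₀ : T) (α₀ : Path x₀ x₀) : ℝ≥0∞ :=
  ⨅ (f : T → UnitAddCircle) (_ : DegOneLip x₀ α₀ f), ∫⁻ x, pLip f x ^ p ∂μ

/-- The codimension 1 spherical Hausdorff measure, as a set function:
`H(A) = sup_{δ>0} inf { ∑ μ(B_i)/r_i }`, the infimum being over countable covers of `A`
by balls `B_i` of radii `r_i ≤ δ`. -/
def codimH {T : Type*} [MetricSpace T] [MeasurableSpace T] (μ : Measure T)
    (A : Set T) : ℝ≥0∞ :=
  ⨆ (δ : ℝ) (_ : 0 < δ),
    ⨅ (c : ℕ → T) (r : ℕ → ℝ) (_ : ∀ i, r i ≤ δ)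
      (_ : A ⊆ ⋃ i, ball (c i) (r i)),
        ∑' i, μ (ball (c i) (r i)) / ENNReal.ofReal (r i)

/-- The integral `∫_S g dH` of `g ≥ 0` over `S` against the codimension 1 Hausdorff
measure, via the layer-cake (Choquet) formula. -/
def choquetIntegral {T : Type*} [MetricSpace T] [MeasurableSpace T] (μ : Measure T)
    (S : Set T) (g : T → ℝ≥0∞) : ℝ≥0∞ :=
  ∫⁻ t in Set.Ioi (0 : ℝ), codimH μ {x | x ∈ S ∧ ENNReal.ofReal t < g x}

/-- The family `Γ*` of all level sets `φ⁻¹[0]` of finite codimension 1 Hausdorff measure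
of continuous degree-1 maps `φ : T → ℝ/ℤ`. -/
def Surfaces {T : Type*} [MetricSpace T] [MeasurableSpace T] (μ : Measure T)
    (x₀ : T) (α₀ : Path x₀ x₀) : Set (Set T) :=
  {S | ∃ φ : T → UnitAddCircle, HasDegree x₀ α₀ φ 1 ∧ S = φ ⁻¹' {0} ∧ codimH μ S < ⊤}

/-- The surface `q`-modulus of a family of surfaces, the surfaces being equipped with the
codimension 1 Hausdorff measure. -/
def surfModOf {T : Type*} [MetricSpace T] [MeasurableSpace T] (μ : Measure T) (q : ℝ)
    (𝒮 : Set (Set T)) : ℝ≥0∞ :=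
  ⨅ (ρ : T → ℝ≥0∞) (_ : Measurable ρ ∧ ∀ S ∈ 𝒮, 1 ≤ choquetIntegral μ S ρ),
    ∫⁻ x, ρ x ^ q ∂μ

/-- The surface modulus `mod_q T`. -/
def surfMod {T : Type*} [MetricSpace T] [MeasurableSpace T] (μ : Measure T) (q : ℝ)
    (x₀ : T) (α₀ : Path x₀ x₀) : ℝ≥0∞ :=
  surfModOf μ q (Surfaces μ x₀ α₀)

/-- The family `Γ*` with the `(q-1)`-dimensional Hausdorff measure instead. -/
def SurfacesH {T : Type*} [MetricSpace T] [MeasurableSpace T] [BorelSpace T] (q : ℝ)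
    (x₀ : T) (α₀ : Path x₀ x₀) : Set (Set T) :=
  {S | ∃ φ : T → UnitAddCircle, HasDegree x₀ α₀ φ 1 ∧ S = φ ⁻¹' {0} ∧ μH[q - 1] S < ⊤}

/-- The surface modulus `mod_q T` defined through the `(q-1)`-dimensional Hausdorff
measures `H^{q-1} ⌞ S`, `S ∈ Γ*`. -/
def surfModH {T : Type*} [MetricSpace T] [MeasurableSpace T] [BorelSpace T]
    (μ : Measure T) (q pstar : ℝ) (x₀ : T) (α₀ : Path x₀ x₀) : ℝ≥0∞ :=
  ⨅ (ρ : T → ℝ≥0∞)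
    (_ : Measurable ρ ∧ ∀ S ∈ SurfacesH (T := T) q x₀ α₀, 1 ≤ ∫⁻ x in S, ρ x ∂μH[q - 1]),
      ∫⁻ x, ρ x ^ pstar ∂μ

/-- The standing assumptions 2.1. -/
def Standing {T : Type*} [MetricSpace T] [MeasurableSpace T] (μ : Measure T)
    (Cμ : ℝ≥0∞) (CP lP : ℝ) (x₀ : T) (α₀ : Path x₀ x₀) : Prop :=
  IsDoubling μ Cμ ∧ SupportsPoincare μ CP lP ∧ SemilocallySimplyConnected T ∧
    IsGenerator x₀ α₀ ∧ ∃ f : T → UnitAddCircle, DegOneLip x₀ α₀ f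

/-! ### The universal cover -/

/-- `π` is a local isometry. -/
def IsLocalIsometry {X Y : Type*} [MetricSpace X] [MetricSpace Y] (π : X → Y) : Prop :=
  ∀ x : X, ∃ ε : ℝ, 0 < ε ∧
    ∀ y ∈ ball x ε, ∀ z ∈ ball x ε, dist (π y) (π z) = dist y z

/-- `(T̃, π)` is the universal cover of `T`, with `T̃` carrying the length metric pulled
back by `π` (so that `π` is a local isometry). -/
def CoverSetup {T Tt : Type*} [MetricSpace T] [MetricSpace Tt] (π : Tt → T) : Prop :=
  IsCoveringMap π ∧ Function.Surjective π ∧ IsLocalIsometry π ∧ SimplyConnectedSpace Tt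

/-- `τ` is the deck transformation of the cover `π` determined by
`τ (γ̃ 0) = γ̃ 1` for every lift `γ̃` of every degree-1 loop `γ`. -/
def IsDeck {T Tt : Type*} [MetricSpace T] [MetricSpace Tt] (π : Tt → T)
    (x₀ : T) (α₀ : Path x₀ x₀) (τ : Tt → Tt) : Prop :=
  Continuous τ ∧ (∀ x, π (τ x) = π x) ∧
    ∀ (x : T) (γ : Path x x), IsDegreeOneLoop x₀ α₀ γ →
      ∀ γt : C(unitInterval, Tt), (∀ t, π (γt t) = γ t) → τ (γt 0) = γt 1

/-- `μ̃` is the natural lift of `μ` to the cover: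
`μ̃ (A) = ∫ #(π⁻¹(x) ∩ A) dμ (x)`. -/
def IsLiftedMeasure {T Tt : Type*} [MetricSpace T] [MeasurableSpace T]
    [MetricSpace Tt] [MeasurableSpace Tt] (π : Tt → T) (μ : Measure T)
    (μt : Measure Tt) : Prop :=
  ∀ A : Set Tt, MeasurableSet A → μt A = ∫⁻ x, ((π ⁻¹' {x} ∩ A).encard : ℝ≥0∞) ∂μ

/-! ### Newtonian spaces -/

/-- The seminorm of `N^{1,p}(U)`. -/
def NSeminorm {X : Type*} [PseudoMetricSpace X] [MeasurableSpace X] (μ : Measure X)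
    (p : ℝ) (U : Set X) (f : X → ℝ) : ℝ≥0∞ :=
  (∫⁻ x in U, ENNReal.ofReal |f x| ^ p ∂μ) ^ (1 / p) +
    ⨅ (ρ : X → ℝ≥0∞) (_ : Measurable ρ ∧ IsWeakUpperGradientOn μ p U f ρ),
      (∫⁻ x in U, ρ x ^ p ∂μ) ^ (1 / p)

/-- `f ∈ N^{1,p}_loc`. -/
def MemNloc {X : Type*} [PseudoMetricSpace X] [MeasurableSpace X] (μ : Measure X)
    (p : ℝ) (f : X → ℝ) : Prop :=
  ∀ U : Set X, IsOpen U → IsCompact (closure U) →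
    (∫⁻ x in U, ENNReal.ofReal |f x| ^ p ∂μ) < ⊤ ∧
      ∃ ρ : X → ℝ≥0∞, Measurable ρ ∧ IsWeakUpperGradientOn μ p U f ρ ∧
        (∫⁻ x in U, ρ x ^ p ∂μ) < ⊤

/-- The collection `F`: nonnegative Borel functions `ρ` on `T` such that `ρ ∘ π` is a
`p`-weak upper gradient of some `f ∈ N^{1,p}_loc (T̃)` with `f ∘ τ - f = 1` a.e. -/
def MemF {T Tt : Type*} [MetricSpace T] [MeasurableSpace T] [MetricSpace Tt]
    [MeasurableSpace Tt] (π : Tt → T) (τ : Tt → Tt) (μt : Measure Tt) (p : ℝ)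
    (ρ : T → ℝ≥0∞) : Prop :=
  Measurable ρ ∧ ∃ f : Tt → ℝ, MemNloc μt p f ∧ (∀ᵐ x ∂μt, f (τ x) - f x = 1) ∧
    IsWeakUpperGradient μt p f (ρ ∘ π)

/-- The capacity `cap_p^F T`. -/
def capF {T Tt : Type*} [MetricSpace T] [MeasurableSpace T] [MetricSpace Tt]
    [MeasurableSpace Tt] (μ : Measure T) (π : Tt → T) (τ : Tt → Tt) (μt : Measure Tt)
    (p : ℝ) : ℝ≥0∞ :=
  ⨅ (ρ : T → ℝ≥0∞) (_ : MemF π τ μt p ρ), ∫⁻ x, ρ x ^ p ∂μ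

/-! ### Miscellaneous operators -/

/-- The restricted Hardy–Littlewood maximal operator `M_R`. -/
def restrMax {T : Type*} [MetricSpace T] [MeasurableSpace T] (μ : Measure T)
    (R : ℝ≥0∞) (g : T → ℝ≥0∞) (x : T) : ℝ≥0∞ :=
  ⨆ (s : ℝ) (_ : 0 < s ∧ ENNReal.ofReal s ≤ R),
    (∫⁻ y in ball x s, g y ∂μ) / μ (ball x s)

/-- The upper Lebesgue integral. -/
def upperLintegral {Y : Type*} [MeasurableSpace Y] (ν : Measure Y)
    (F : Y → ℝ≥0∞) : ℝ≥0∞ :=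
  ⨅ (G : Y → ℝ≥0∞) (_ : Measurable G ∧ ∀ y, F y ≤ G y), ∫⁻ y, G y ∂ν

/-! ### The sets `Ω` and the functions `ψ̃`, `ζ`, `ψ` of Section 4.3 -/

/-- The set of points reachable from `A` by a rectifiable path inside `W`. -/
def reach {T : Type*} [MetricSpace T] (A W : Set T) : Set T :=
  {x | ∃ γ : UPath T, γ.start ∈ A ∧ γ.finish = x ∧ γ.InSet W}

/-- `inf_γ ∫_γ ρ ds` over rectifiable paths connecting `A` to `x` inside `W`. -/
def pathDist {T : Type*} [MetricSpace T] (ρ : T → ℝ≥0∞) (A W : Set T) (x : T) : ℝ≥0∞ :=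
  ⨅ (γ : UPath T) (_ : γ.start ∈ A ∧ γ.finish = x ∧ γ.InSet W), γ.integral ρ

open scoped Classical in
/-- The function `ψ̃`. -/
def psiTilde {T : Type*} [MetricSpace T] (ρ : T → ℝ≥0∞) (A W : Set T) (x : T) : ℝ :=
  if x ∈ reach A W then (pathDist ρ A W x).toReal else 0

/-- The function `min {1, ψ̃}`. -/
def zeta {T : Type*} [MetricSpace T] (ρ : T → ℝ≥0∞) (A W : Set T) (x : T) : ℝ :=
  min 1 (psiTilde ρ A W x)

/-- The competing admissible map `ψ = [min {1, ψ̃}] : T → ℝ/ℤ`. -/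
def psiMap {T : Type*} [MetricSpace T] (ρ : T → ℝ≥0∞) (A W : Set T) (x : T) :
    UnitAddCircle :=
  ((zeta ρ A W x : ℝ) : UnitAddCircle)

end Duality

/-!
Fix a Lipschitz map `g : T → ℝ/ℤ` of degree one and lift it to `h : T̃ → ℝ` with `h ∘ τ = h + 1`.

The inequality `cap^F ≤ cap` holds because the lift of a competitor of `cap` is a competitor of
`cap^F`: a path family in `T̃` which projects into a family of zero modulus has zero modulus.

Conversely, let `f` and `ρ` be as in the definition of `cap^F`. Exceptional null sets and path
families are removed by adding to `ρ` a function of small energy, and the sum is replaced by a lower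
semicontinuous majorant. Then `f - h` is invariant under `τ` along every path on which `ρ` is
integrable, so it descends to a function `v` on `T`. By the Poincaré inequality, two points at which
the maximal function of `ρ + L + 1` is at most `n` are joined by a path whose integral of this
function is at most `K n` times their distance (here `L` is the Lipschitz constant of `g`), so `v`
is Lipschitz with constant `K n` on the set of all such points. With `w` a Lipschitz extension from
there, `g + [w]` is a Lipschitz map of degree one whose energy exceeds `∫ ρ^p` by at most a multiple
of `n^p μ {M(ρ + L + 1) > n}`, which tends to zero.
-/

namespace Duality

/-! ### Curves of one real variable and their upper gradients -/

section Interval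

lemma lintegral_Icc_add (g : ℝ → ℝ≥0∞) {r s t : ℝ} (hrs : r ≤ s) (hst : s ≤ t) :
    (∫⁻ x in Icc r s, g x) + (∫⁻ x in Icc s t, g x) = ∫⁻ x in Icc r t, g x := by
  rw [← Measure.restrict_congr_set (Ioc_ae_eq_Icc (a := s) (b := t)),
    ← Icc_union_Ioc_eq_Icc hrs hst]
  refine (lintegral_union measurableSet_Ioc ?_).symm
  exact disjoint_left.2 fun x hx hx' => hx'.1.not_ge hx.2

lemma rel_of_forall_nhdsWithin_Icc {P : ℝ → ℝ → Prop} {a b : ℝ} (hab : a ≤ b)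
    (htrans : ∀ ⦃r s t⦄, r ≤ s → s ≤ t → P r s → P s t → P r t)
    (hloc : ∀ t ∈ Icc a b, ∃ U ∈ 𝓝[Icc a b] t, ∀ r ∈ U, ∀ s ∈ U, r ≤ s → P r s) : P a b := by
  choose! U hU hP using hloc
  obtain ⟨t, ht0, hmono, ⟨m, hm⟩, ht⟩ := exists_monotone_Icc_subset_open_cover_Icc hab
    (c := fun i : Icc a b => interior {x : Icc a b | (x : ℝ) ∈ U i}) (fun _ => isOpen_interior)
    (fun x _ => mem_iUnion.2 ⟨x, mem_interior_iff_mem_nhds.2 <|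
      preimage_coe_mem_nhds_subtype.2 (hU x x.2)⟩)
  have hPt : ∀ n, P a (t n) := by
    intro n
    induction n with
    | zero =>
      have haI : a ∈ Icc a b := ⟨le_rfl, hab⟩
      have haU : a ∈ U a := mem_of_mem_nhdsWithin haI (hU a haI)
      rw [ht0]
      exact hP a haI a haU a haU le_rfl
    | succ n ih =>
      obtain ⟨i, hi⟩ := ht n
      have hle := hmono n.le_succ
      have hU_sub : Icc (t n) (t (n + 1)) ⊆ {x | (x : ℝ) ∈ U i} := hi.trans interior_subset
      exact htrans (t n).2.1 hle ih <|
        hP i i.2 _ (hU_sub ⟨le_rfl, hle⟩) _ (hU_sub ⟨hle, le_rfl⟩) hle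
  simpa only [hm m le_rfl] using hPt m

lemma lintegral_Icc_const (c : ℝ≥0∞) {r s : ℝ} (hrs : r ≤ s) :
    ∫⁻ _ in Icc r s, c = c * edist r s := by
  rw [setLIntegral_const, Real.volume_Icc, edist_comm, edist_dist, Real.dist_eq,
    abs_of_nonneg (sub_nonneg.2 hrs)]

section PseudoEMetric

variable {Y : Type*} [PseudoEMetricSpace Y] {H : ℝ → Y} {ρ : ℝ → ℝ≥0∞} {a b : ℝ}

lemma edist_le_lintegral_of_forall_nhdsWithin_Icc (hab : a ≤ b)
    (hloc : ∀ t ∈ Icc a b, ∃ U ∈ 𝓝[Icc a b] t, ∀ r ∈ U, ∀ s ∈ U, r ≤ s →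
      edist (H r) (H s) ≤ ∫⁻ x in Icc r s, ρ x) :
    edist (H a) (H b) ≤ ∫⁻ x in Icc a b, ρ x := by
  refine rel_of_forall_nhdsWithin_Icc
    (P := fun r s => edist (H r) (H s) ≤ ∫⁻ x in Icc r s, ρ x) hab ?_ hloc
  intro r s t hrs hst h₁ h₂
  rw [← lintegral_Icc_add ρ hrs hst]
  exact (edist_triangle _ _ _).trans (add_le_add h₁ h₂)

lemma lipschitzOnWith_Icc_of_forall_nhdsWithin {K : ℝ≥0}
    (hloc : ∀ t ∈ Icc a b, ∃ U ∈ 𝓝[Icc a b] t, LipschitzOnWith K H U) :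
    LipschitzOnWith K H (Icc a b) := by
  have hle : ∀ r ∈ Icc a b, ∀ s ∈ Icc a b, r ≤ s → edist (H r) (H s) ≤ K * edist r s := by
    intro r hr s hs hrs
    have hsub : Icc r s ⊆ Icc a b := Icc_subset_Icc hr.1 hs.2
    rw [← lintegral_Icc_const _ hrs]
    refine edist_le_lintegral_of_forall_nhdsWithin_Icc hrs fun t ht => ?_
    obtain ⟨U, hU, hLip⟩ := hloc t (hsub ht)
    exact ⟨U, nhdsWithin_mono t hsub hU, fun x hx y hy hxy =>
      lintegral_Icc_const (K : ℝ≥0∞) hxy ▸ hLip hx hy⟩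
  intro r hr s hs
  rcases le_total r s with hrs | hsr
  · exact hle r hr s hs hrs
  · rw [edist_comm, edist_comm r]
    exact hle s hs r hr hsr

/-- `ρ` is an upper gradient of the curve `H` along `[a, b]`: it controls the increment of `H` over
every subinterval. -/
def IsUpperGradientAlong (H : ℝ → Y) (ρ : ℝ → ℝ≥0∞) (a b : ℝ) : Prop :=
  ∀ ⦃s t⦄, a ≤ s → s ≤ t → t ≤ b → edist (H s) (H t) ≤ ∫⁻ x in Icc s t, ρ x

end PseudoEMetric

section Real

variable {h H : ℝ → ℝ} {ρ : ℝ → ℝ≥0∞} {a b : ℝ}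

lemma IsUpperGradientAlong.abs_sub_le_integral_sub (hH : IsUpperGradientAlong H ρ a b)
    (hρ : AEMeasurable ρ (volume.restrict (Icc a b))) (hfin : ∫⁻ x in Icc a b, ρ x ≠ ⊤)
    {s t : ℝ} (has : a ≤ s) (hst : s ≤ t) (htb : t ≤ b) :
    |H t - H s| ≤ (∫ x in a..t, (ρ x).toReal) - ∫ x in a..s, (ρ x).toReal := by
  have hint : ∀ u, a ≤ u → u ≤ b → IntervalIntegrable (fun x => (ρ x).toReal) volume a u :=
    fun u hau hub => (intervalIntegrable_iff_integrableOn_Icc_of_le hau).2 <|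
      IntegrableOn.mono_set (integrable_toReal_of_lintegral_ne_top hρ hfin)
        (Icc_subset_Icc_right hub)
  have hsub : Icc s t ⊆ Icc a b := Icc_subset_Icc has htb
  have hρ' : AEMeasurable ρ (volume.restrict (Icc s t)) :=
    hρ.mono_measure (Measure.restrict_mono hsub le_rfl)
  have hfin' : ∫⁻ x in Icc s t, ρ x ≠ ⊤ := ne_top_of_le_ne_top hfin (lintegral_mono_set hsub)
  rw [intervalIntegral.integral_interval_sub_left (hint t (has.trans hst) htb)
    (hint s has (hst.trans htb)), intervalIntegral.integral_of_le hst,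
    ← integral_Icc_eq_integral_Ioc, integral_toReal hρ' (ae_lt_top' hρ' hfin'),
    ← ENNReal.ofReal_le_iff_le_toReal hfin', ← Real.dist_eq, ← edist_dist, edist_comm]
  exact hH has hst htb

lemma ae_neBot_nhdsWithin_inter_Ioi (s : Set ℝ) : ∀ᵐ t, t ∈ s → (𝓝[s ∩ Ioi t] t).NeBot := by
  have hnull := (countable_setOfPred_isolated_right_within (s := s)).measure_zero volume
  filter_upwards [measure_eq_zero_iff_ae_notMem.1 hnull] with t ht hts
  exact ⟨fun hbot => ht ⟨hts, hbot⟩⟩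

lemma abs_le_of_hasDerivAt_of_abs_sub_le {R : ℝ → ℝ} {h' R' t : ℝ} {s : Set ℝ}
    (hs : (𝓝[s ∩ Ioi t] t).NeBot) (hh : HasDerivAt h h' t) (hR : HasDerivAt R R' t)
    (hle : ∀ x ∈ s ∩ Ioi t, |h x - h t| ≤ R x - R t) : |h'| ≤ R' := by
  have hpunctured : 𝓝[s ∩ Ioi t] t ≤ 𝓝[≠] t := nhdsWithin_mono _ fun x hx => hx.2.ne'
  refine le_of_tendsto_of_tendsto
    ((hasDerivAt_iff_tendsto_slope.1 hh).mono_left hpunctured).abs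
    ((hasDerivAt_iff_tendsto_slope.1 hR).mono_left hpunctured) ?_
  filter_upwards [self_mem_nhdsWithin] with x hx
  have htx : 0 < x - t := sub_pos.2 hx.2
  rw [slope_def_field, slope_def_field, abs_div, abs_of_pos htx]
  exact div_le_div_of_nonneg_right (hle x hx) htx.le

lemma edist_le_lintegral_enorm_deriv (hab : a ≤ b) (hh : AbsolutelyContinuousOnInterval h a b) :
    edist (h a) (h b) ≤ ∫⁻ t in Icc a b, ‖deriv h t‖ₑ := by
  rw [edist_comm, edist_eq_enorm_sub, ← hh.integral_deriv_eq_sub,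
    intervalIntegral.integral_of_le hab, ← integral_Icc_eq_integral_Ioc]
  exact enorm_integral_le_lintegral_enorm _

/-- At almost every point of `E`, both functions are differentiable and the point is a limit of
points of `E`, where the two functions have the same increments. -/
lemma ae_enorm_deriv_le_of_eqOn {E : Set ℝ} (hab : a ≤ b)
    (hh : AbsolutelyContinuousOnInterval h a b)
    (hρ : AEMeasurable ρ (volume.restrict (Icc a b))) (hfin : ∫⁻ x in Icc a b, ρ x ≠ ⊤)
    (hH : IsUpperGradientAlong H ρ a b) (hE : EqOn h H (E ∩ Icc a b)) :
    ∀ᵐ t, t ∈ E ∩ Icc a b → ‖deriv h t‖ₑ ≤ ρ t := by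
  have hint : IntervalIntegrable (fun x => (ρ x).toReal) volume a b :=
    (intervalIntegrable_iff_integrableOn_Icc_of_le hab).2
      (integrable_toReal_of_lintegral_ne_top hρ hfin)
  filter_upwards [hh.ae_differentiableAt, hint.ae_hasDerivAt_integral,
    (ae_restrict_iff' measurableSet_Icc).1 (ae_lt_top' hρ hfin),
    ae_neBot_nhdsWithin_inter_Ioi (E ∩ Icc a b)] with t hdiff hprim htop hbot ht
  rw [uIcc_of_le hab] at hdiff hprim
  rw [← ofReal_norm, ENNReal.ofReal_le_iff_le_toReal (htop ht.2).ne]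
  refine abs_le_of_hasDerivAt_of_abs_sub_le (hbot ht) (hdiff ht.2).hasDerivAt
    (hprim ht.2 a ⟨le_rfl, hab⟩) fun x hx => ?_
  rw [hE ht, hE hx.1]
  exact hH.abs_sub_le_integral_sub hρ hfin ht.2.1 (le_of_lt hx.2) hx.1.2.2

lemma edist_le_lintegral_of_eqOn {K : ℝ≥0} {E : Set ℝ} {θ : ℝ → ℝ≥0∞} (hab : a ≤ b)
    (hh : LipschitzOnWith K h (Icc a b))
    (hρ : AEMeasurable ρ (volume.restrict (Icc a b))) (hfin : ∫⁻ x in Icc a b, ρ x ≠ ⊤)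
    (hH : IsUpperGradientAlong H ρ a b) (hE : EqOn h H (E ∩ Icc a b))
    (hρθ : ∀ t ∈ E ∩ Icc a b, ρ t ≤ θ t) (hKθ : ∀ t ∈ Icc a b \ E, K ≤ θ t) :
    edist (h a) (h b) ≤ ∫⁻ t in Icc a b, θ t := by
  have hac : AbsolutelyContinuousOnInterval h a b :=
    LipschitzOnWith.absolutelyContinuousOnInterval (by rwa [uIcc_of_le hab])
  refine (edist_le_lintegral_enorm_deriv hab hac).trans (lintegral_mono_ae ?_)
  rw [← Measure.restrict_congr_set Ioo_ae_eq_Icc, ae_restrict_iff' measurableSet_Ioo]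
  filter_upwards [ae_enorm_deriv_le_of_eqOn hab hac hρ hfin hH hE] with t hderiv ht
  have htI := Ioo_subset_Icc_self ht
  by_cases htE : t ∈ E
  · exact (hderiv ⟨htE, htI⟩).trans (hρθ t ⟨htE, htI⟩)
  · refine le_trans ?_ (hKθ t ⟨htI, htE⟩)
    exact_mod_cast norm_deriv_le_of_lipschitzOn (Icc_mem_nhds ht.1 ht.2) hh

end Real

end Interval

/-! ### Doubling measures and the maximal function -/

section MaximalFunction

lemma ball_eq_univ_of_diam_lt {X : Type*} [PseudoMetricSpace X] [BoundedSpace X] (x : X) {r : ℝ}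
    (hr : diam (univ : Set X) < r) : ball x r = univ :=
  eq_univ_of_forall fun y =>
    (dist_le_diam_of_mem (BoundedSpace.bounded_univ) (mem_univ y) (mem_univ x)).trans_lt hr

variable {T : Type*} [MetricSpace T] [MeasurableSpace T] {μ : Measure T}

/-- `C` is a doubling constant of `μ` for balls of every radius, in contrast to `IsDoubling`, which
only concerns radii below the diameter. -/
def IsUniformlyDoubling (μ : Measure T) (C : ℝ≥0) : Prop :=
  ∀ (x : T) (r : ℝ), 0 < r → μ (ball x (2 * r)) ≤ C * μ (ball x r)

lemma IsDoubling.measure_ball_two_mul_le {Cμ : ℝ≥0∞} (h : IsDoubling μ Cμ) (x : T) {r : ℝ}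
    (hr : 0 < r) (hrD : r < diam (univ : Set T)) :
    μ (ball x (2 * r)) ≤ Cμ.toNNReal * μ (ball x r) := by
  obtain ⟨hpos, hle, hfin⟩ := h x r hr hrD
  have hball : μ (ball x r) ≠ 0 := fun h0 => by
    rw [h0, mul_zero] at hle
    exact hpos.not_ge hle
  have hCμ : Cμ ≠ ⊤ := by
    rintro rfl
    rw [ENNReal.top_mul hball] at hfin
    exact hfin.false
  rwa [ENNReal.coe_toNNReal hCμ]

lemma IsDoubling.exists_isUniformlyDoubling [BoundedSpace T] {Cμ : ℝ≥0∞} (h : IsDoubling μ Cμ) :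
    ∃ C, IsUniformlyDoubling μ C := by
  refine ⟨max Cμ.toNNReal 1, fun x r hr => ?_⟩
  rcases lt_trichotomy r (diam (univ : Set T)) with hrD | hrD | hrD
  · refine (h.measure_ball_two_mul_le x hr hrD).trans ?_
    gcongr
    exact le_max_left _ _
  · have hle := h.measure_ball_two_mul_le x (r := 3 / 4 * r) (by linarith) (by linarith)
    rw [ball_eq_univ_of_diam_lt x (by linarith)] at hle ⊢
    refine hle.trans ?_
    gcongr
    · exact le_max_left _ _
    · linarith
  · rw [ball_eq_univ_of_diam_lt x hrD, ball_eq_univ_of_diam_lt x (by linarith)]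
    exact le_mul_of_one_le_left' (by exact_mod_cast le_max_right _ _)

lemma IsUniformlyDoubling.measure_ball_four_mul_le {C : ℝ≥0} (hC : IsUniformlyDoubling μ C) (x : T)
    {r : ℝ} (hr : 0 < r) : μ (ball x (4 * r)) ≤ (C ^ 2 : ℝ≥0) * μ (ball x r) := by
  calc μ (ball x (4 * r)) = μ (ball x (2 * (2 * r))) := by ring_nf
    _ ≤ C * μ (ball x (2 * r)) := hC x _ (by linarith)
    _ ≤ C * (C * μ (ball x r)) := by gcongr; exact hC x r hr
    _ = (C ^ 2 : ℝ≥0) * μ (ball x r) := by rw [ENNReal.coe_pow, pow_two, mul_assoc]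

/-- The Hardy–Littlewood maximal function of `g`, over centred balls of every radius. -/
def maximalFunction (μ : Measure T) (g : T → ℝ≥0∞) : T → ℝ≥0∞ := restrMax μ ⊤ g

lemma setLIntegral_ball_div_le_maximalFunction (g : T → ℝ≥0∞) (x : T) {r : ℝ} (hr : 0 < r) :
    (∫⁻ y in ball x r, g y ∂μ) / μ (ball x r) ≤ maximalFunction μ g x :=
  le_iSup₂_of_le r ⟨hr, le_top⟩ le_rfl

lemma lt_maximalFunction_iff [IsFiniteMeasure μ] {g : T → ℝ≥0∞} {lam : ℝ≥0} {x : T} :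
    lam < maximalFunction μ g x ↔
      ∃ r : ℝ, 0 < r ∧ lam * μ (ball x r) < ∫⁻ y in ball x r, g y ∂μ := by
  simp only [maximalFunction, restrMax, le_top, and_true, lt_iSup_iff, exists_prop]
  refine exists_congr fun r => and_congr_right fun _ => ?_
  exact ENNReal.lt_div_iff_mul_lt (Or.inr ENNReal.coe_ne_top) (Or.inl (measure_ne_top _ _))

lemma maximalFunction_mono {g g' : T → ℝ≥0∞} (h : ∀ x, g x ≤ g' x) (x : T) :
    maximalFunction μ g x ≤ maximalFunction μ g' x :=
  iSup₂_mono fun _ _ => by gcongr; exact h _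

lemma maximalFunction_le_add_const {g g' : T → ℝ≥0∞} {m : ℝ≥0∞} (h : ∀ x, g x ≤ g' x + m) (x : T) :
    maximalFunction μ g x ≤ maximalFunction μ g' x + m := by
  refine iSup₂_le fun r hr => ?_
  calc (∫⁻ y in ball x r, g y ∂μ) / μ (ball x r)
      ≤ ((∫⁻ y in ball x r, g' y ∂μ) + m * μ (ball x r)) / μ (ball x r) := by
        gcongr
        rw [← setLIntegral_const, ← lintegral_add_right _ measurable_const]
        exact lintegral_mono h
    _ ≤ maximalFunction μ g' x + m := by
        rw [ENNReal.add_div]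
        exact add_le_add (setLIntegral_ball_div_le_maximalFunction g' x hr.1)
          (ENNReal.div_le_of_le_mul le_rfl)

lemma le_maximalFunction_of_forall_le [IsFiniteMeasure μ] [μ.IsOpenPosMeasure] {g : T → ℝ≥0∞}
    {m : ℝ≥0∞} (h : ∀ x, m ≤ g x) (x : T) : m ≤ maximalFunction μ g x := by
  refine le_trans ?_ (setLIntegral_ball_div_le_maximalFunction g x one_pos)
  rw [ENNReal.le_div_iff_mul_le (Or.inl (measure_ball_pos μ x one_pos).ne')
    (Or.inl (measure_ne_top _ _)), ← setLIntegral_const]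
  exact lintegral_mono h

lemma maximalFunction_const_mul {m : ℝ≥0∞} (hm : m ≠ ⊤) (g : T → ℝ≥0∞) (x : T) :
    maximalFunction μ (fun y => m * g y) x = m * maximalFunction μ g x := by
  simp only [maximalFunction, restrMax, ENNReal.mul_iSup, lintegral_const_mul' _ _ hm,
    mul_div_assoc]

section WeakType

variable [BoundedSpace T] [TopologicalSpace.SeparableSpace T] [IsFiniteMeasure μ] {C : ℝ≥0}

/-- Vitali's covering lemma, applied to balls witnessing that the maximal function exceeds `lam`;
radii above the diameter of the space are superfluous. -/
lemma exists_disjoint_balls_of_lt_maximalFunction (g : T → ℝ≥0∞) (lam : ℝ≥0) :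
    ∃ (r : T → ℝ) (u : Set T), u.Countable ∧ u.PairwiseDisjoint (fun x => ball x (r x)) ∧
      {x | lam < maximalFunction μ g x} ⊆ ⋃ x ∈ u, ball x (4 * r x) ∧
      ∀ x ∈ u, 0 < r x ∧ lam * μ (ball x (r x)) < ∫⁻ y in ball x (r x), g y ∂μ := by
  set D := diam (univ : Set T)
  have hradius : ∀ x ∈ {x | lam < maximalFunction μ g x}, ∃ r : ℝ, 0 < r ∧ r ≤ D + 1 ∧
      lam * μ (ball x r) < ∫⁻ y in ball x r, g y ∂μ := by
    intro x hx
    obtain ⟨r, hr, hlt⟩ := lt_maximalFunction_iff.1 hx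
    rcases le_or_gt r (D + 1) with hrD | hrD
    · exact ⟨r, hr, hrD, hlt⟩
    · refine ⟨D + 1, by linarith [diam_nonneg (s := (univ : Set T))], le_rfl, ?_⟩
      rw [ball_eq_univ_of_diam_lt x (by linarith)] at hlt
      rwa [ball_eq_univ_of_diam_lt x (lt_add_one D)]
  choose! r hr hrD hlt using hradius
  obtain ⟨u, hu, hdisj, hcover⟩ := Vitali.exists_disjoint_subfamily_covering_enlargement_ball
    {x | lam < maximalFunction μ g x} id r (D + 1) hrD 4 (by norm_num)
  refine ⟨r, u, hdisj.countable_of_isOpen (fun _ _ => isOpen_ball)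
    fun x hx => ⟨x, mem_ball_self (hr x (hu hx))⟩, hdisj, fun x hx => ?_,
    fun x hx => ⟨hr x (hu hx), hlt x (hu hx)⟩⟩
  obtain ⟨b, hb, hsub⟩ := hcover x hx
  exact mem_biUnion hb (hsub (mem_ball_self (hr x hx)))

variable [BorelSpace T]

lemma mul_measure_lt_maximalFunction_le (hC : IsUniformlyDoubling μ C) (g : T → ℝ≥0∞)
    (lam : ℝ≥0) :
    lam * μ {x | lam < maximalFunction μ g x} ≤ (C ^ 2 : ℝ≥0) * ∫⁻ y, g y ∂μ := by
  obtain ⟨r, u, hcount, hdisj, hcover, hu⟩ :=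
    exists_disjoint_balls_of_lt_maximalFunction (μ := μ) g lam
  calc lam * μ {x | lam < maximalFunction μ g x}
      ≤ lam * ∑' x : u, μ (ball x (4 * r x)) := by
        gcongr
        exact (measure_mono hcover).trans (measure_biUnion_le _ hcount _)
    _ ≤ lam * ∑' x : u, (C ^ 2 : ℝ≥0) * μ (ball x (r x)) := by
        gcongr with x
        exact hC.measure_ball_four_mul_le x (hu x x.2).1
    _ = (C ^ 2 : ℝ≥0) * ∑' x : u, lam * μ (ball x (r x)) := by
        rw [ENNReal.tsum_mul_left, ENNReal.tsum_mul_left, mul_left_comm]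
    _ ≤ (C ^ 2 : ℝ≥0) * ∑' x : u, ∫⁻ y in ball x (r x), g y ∂μ := by
        gcongr with x
        exact (hu x x.2).2.le
    _ = (C ^ 2 : ℝ≥0) * ∫⁻ y in ⋃ x ∈ u, ball x (r x), g y ∂μ := by
        rw [lintegral_biUnion hcount (fun _ _ => measurableSet_ball) hdisj]
    _ ≤ (C ^ 2 : ℝ≥0) * ∫⁻ y, g y ∂μ := by
        gcongr
        exact Measure.restrict_le_self

variable {p : ℝ} {g : T → ℝ≥0∞}

/-- The weak type `(1, 1)` estimate is applied to the part of `g` above `m`, which contains all but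
`m` of the maximal function. -/
lemma rpow_mul_measure_lt_maximalFunction_le (hC : IsUniformlyDoubling μ C) (hg : Measurable g)
    (hp : 1 ≤ p) (m : ℝ≥0) :
    (m : ℝ≥0∞) ^ p * μ {x | ↑(2 * m) < maximalFunction μ g x} ≤
      (C ^ 2 : ℝ≥0) * ∫⁻ x in {x | m < g x}, g x ^ p ∂μ := by
  set A := {x | (m : ℝ≥0∞) < g x}
  have hA : MeasurableSet A := measurableSet_lt measurable_const hg
  have rpow_eq : ∀ t : ℝ≥0∞, t ^ p = t ^ (p - 1) * t := fun t => by
    simpa using ENNReal.rpow_add_of_nonneg (x := t) (p - 1) 1 (by linarith) zero_le_one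
  have htrunc : ∀ x, g x ≤ A.indicator g x + m := fun x => by
    by_cases hx : x ∈ A
    · rw [indicator_of_mem hx]
      exact le_self_add
    · simpa only [indicator_of_notMem hx, zero_add] using not_lt.1 hx
  have hsub : {x | ↑(2 * m) < maximalFunction μ g x} ⊆
      {x | m < maximalFunction μ (A.indicator g) x} :=
        fun x (hx : ↑(2 * m) < maximalFunction μ g x) => by
    have hlt := hx.trans_le (maximalFunction_le_add_const htrunc x)
    rw [two_mul, ENNReal.coe_add] at hlt
    exact lt_of_add_lt_add_right hlt
  calc (m : ℝ≥0∞) ^ p * μ {x | ↑(2 * m) < maximalFunction μ g x}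
      ≤ (m : ℝ≥0∞) ^ (p - 1) * (m * μ {x | m < maximalFunction μ (A.indicator g) x}) := by
        rw [rpow_eq, mul_assoc]
        gcongr
    _ ≤ (m : ℝ≥0∞) ^ (p - 1) * ((C ^ 2 : ℝ≥0) * ∫⁻ x in A, g x ∂μ) := by
        rw [← lintegral_indicator hA]
        gcongr _ * ?_
        exact mul_measure_lt_maximalFunction_le hC _ m
    _ = (C ^ 2 : ℝ≥0) * ∫⁻ x in A, (m : ℝ≥0∞) ^ (p - 1) * g x ∂μ := by
        rw [lintegral_const_mul _ hg, mul_left_comm]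
    _ ≤ (C ^ 2 : ℝ≥0) * ∫⁻ x in A, g x ^ p ∂μ := by
        gcongr _ * ?_
        refine setLIntegral_mono (hg.pow_const p) fun x (hx : m < g x) => ?_
        rw [rpow_eq (g x)]
        gcongr

end WeakType

lemma tendsto_setLIntegral_lt_zero {X : Type*} [MeasurableSpace X] {ν : Measure X}
    {f g : X → ℝ≥0∞} {c : ℕ → ℝ≥0∞} (hf : ∫⁻ x, f x ∂ν ≠ ⊤) (hfm : Measurable f)
    (hgm : Measurable g) (hg : ∀ᵐ x ∂ν, g x < ⊤) (hc : Tendsto c atTop (𝓝 ⊤)) :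
    Tendsto (fun n => ∫⁻ x in {x | c n < g x}, f x ∂ν) atTop (𝓝 0) := by
  have hmeas : ∀ n, MeasurableSet {x | c n < g x} := fun n => measurableSet_lt measurable_const hgm
  have hlim := tendsto_lintegral_of_dominated_convergence (μ := ν) (f := 0)
    (F := fun n => {x | c n < g x}.indicator f) f (fun n => hfm.indicator (hmeas n))
    (fun n => ae_of_all _ fun x => indicator_le_self _ _ x) hf ?_
  · simpa only [lintegral_indicator (hmeas _), Pi.zero_apply, lintegral_zero] using hlim
  filter_upwards [hg] with x hx
  refine tendsto_const_nhds.congr' ?_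
  filter_upwards [hc.eventually (lt_mem_nhds hx)] with n hn
  exact (indicator_of_notMem (s := {x | c n < g x}) hn.not_gt f).symm

lemma tendsto_rpow_mul_measure_lt_maximalFunction [BoundedSpace T]
    [TopologicalSpace.SeparableSpace T] [BorelSpace T] [IsFiniteMeasure μ] {C : ℝ≥0}
    (hC : IsUniformlyDoubling μ C) {g : T → ℝ≥0∞} (hg : Measurable g) {p : ℝ} (hp : 1 ≤ p)
    (hfin : ∫⁻ x, g x ^ p ∂μ ≠ ⊤) :
    Tendsto (fun n : ℕ => (n : ℝ≥0∞) ^ p * μ {x | n < maximalFunction μ g x}) atTop (𝓝 0) := by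
  have hp₀ : 0 < p := by linarith
  have hg_lt_top : ∀ᵐ x ∂μ, g x < ⊤ := by
    filter_upwards [ae_lt_top (hg.pow_const p) hfin] with x hx
    exact (ENNReal.rpow_lt_top_iff_of_pos hp₀).1 hx
  have hhalf : Tendsto (fun n : ℕ => ((n / 2 : ℝ≥0) : ℝ≥0∞)) atTop (𝓝 ⊤) := by
    rw [ENNReal.tendsto_coe_nhds_top]
    exact tendsto_natCast_atTop_atTop.atTop_div_const two_pos
  have hlim := ENNReal.Tendsto.const_mul (a := 2 ^ p * (C ^ 2 : ℝ≥0))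
    (tendsto_setLIntegral_lt_zero hfin (hg.pow_const p) hg hg_lt_top hhalf)
    (Or.inr (ENNReal.mul_ne_top (by finiteness) (by finiteness)))
  rw [mul_zero] at hlim
  refine tendsto_of_tendsto_of_tendsto_of_le_of_le tendsto_const_nhds hlim
    (fun _ => zero_le) fun n => ?_
  have hn : (n : ℝ≥0∞) = ↑(2 * (n / 2) : ℝ≥0) := by
    rw [mul_div_cancel₀ _ two_ne_zero, ENNReal.coe_natCast]
  dsimp only
  rw [hn, ENNReal.coe_mul, ENNReal.mul_rpow_of_nonneg _ _ hp₀.le, mul_assoc, mul_assoc,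
    ← ENNReal.coe_mul, ENNReal.coe_ofNat]
  gcongr _ * ?_
  exact rpow_mul_measure_lt_maximalFunction_le hC hg hp _

end MaximalFunction

/-! ### Pointwise estimates from the Poincaré inequality -/

section Telescoping

lemma abs_setAverage_sub_mul_le {X : Type*} [MeasurableSpace X] {ν : Measure X} {u : X → ℝ}
    {B : Set X} (hB₀ : ν B ≠ 0) (hBt : ν B ≠ ⊤) (hu : IntegrableOn u B ν) (c : ℝ) :
    ENNReal.ofReal |(⨍ z in B, u z ∂ν) - c| * ν B ≤ ∫⁻ z in B, ENNReal.ofReal |u z - c| ∂ν := by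
  have hpos : 0 < ν.real B := ENNReal.toReal_pos hB₀ hBt
  have hc : IntegrableOn (fun _ => c) B ν := integrableOn_const hBt
  have havg : ((⨍ z in B, u z ∂ν) - c) * ν.real B = ∫ z in B, (u z - c) ∂ν := by
    rw [integral_sub hu hc, setIntegral_const, setAverage_eq, smul_eq_mul, smul_eq_mul]
    field_simp
  calc ENNReal.ofReal |(⨍ z in B, u z ∂ν) - c| * ν B
      = ENNReal.ofReal |∫ z in B, (u z - c) ∂ν| := by
        rw [← havg, abs_mul, abs_of_pos hpos, ENNReal.ofReal_mul (abs_nonneg _),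
          ofReal_measureReal hBt]
    _ ≤ ENNReal.ofReal (∫ z in B, |u z - c| ∂ν) :=
        ENNReal.ofReal_le_ofReal abs_integral_le_integral_abs
    _ = ∫⁻ z in B, ENNReal.ofReal |u z - c| ∂ν :=
        ofReal_integral_eq_lintegral_ofReal (hu.sub hc).abs (ae_of_all _ fun _ => abs_nonneg _)

lemma abs_setAverage_sub_le {X : Type*} [MeasurableSpace X] {ν : Measure X} {u : X → ℝ}
    {B : Set X} (hB₀ : ν B ≠ 0) (hBt : ν B ≠ ⊤) (hu : IntegrableOn u B ν) {c E : ℝ} (hE : 0 ≤ E)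
    (h : ∫⁻ z in B, ENNReal.ofReal |u z - c| ∂ν ≤ ENNReal.ofReal E * ν B) :
    |(⨍ z in B, u z ∂ν) - c| ≤ E := by
  have hle := (abs_setAverage_sub_mul_le hB₀ hBt hu c).trans h
  rwa [ENNReal.mul_le_mul_iff_left hB₀ hBt, ENNReal.ofReal_le_ofReal_iff hE] at hle

lemma dist_setAverage_le {X : Type*} [MeasurableSpace X] {ν : Measure X} {u : X → ℝ}
    {B' B : Set X} {M : ℝ≥0} {E : ℝ} (hE : 0 ≤ E) (hsub : B' ⊆ B) (hB₀ : ν B' ≠ 0)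
    (hBt : ν B ≠ ⊤) (hM : ν B ≤ M * ν B') (hu : IntegrableOn u B ν)
    (hosc : ∫⁻ z in B, ENNReal.ofReal |u z - ⨍ w in B, u w ∂ν| ∂ν ≤ ENNReal.ofReal E * ν B) :
    dist (⨍ z in B, u z ∂ν) (⨍ z in B', u z ∂ν) ≤ M * E := by
  rw [dist_comm, Real.dist_eq]
  refine abs_setAverage_sub_le hB₀ (measure_ne_top_of_subset hsub hBt) (hu.mono_set hsub)
    (by positivity) ?_
  calc ∫⁻ z in B', ENNReal.ofReal |u z - ⨍ w in B, u w ∂ν| ∂ν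
      ≤ ENNReal.ofReal E * ν B := (lintegral_mono_set hsub).trans hosc
    _ ≤ ENNReal.ofReal E * (M * ν B') := by gcongr
    _ = ENNReal.ofReal (M * E) * ν B' := by
        rw [ENNReal.ofReal_mul M.coe_nonneg, ENNReal.ofReal_coe_nnreal, mul_left_comm, mul_assoc]

variable {T : Type*} [MetricSpace T] [MeasurableSpace T] {μ : Measure T} {u : T → ℝ}

lemma tendsto_setAverage_ball
    (hball : ∀ (x : T) (r : ℝ), 0 < r → 0 < μ (ball x r) ∧ μ (ball x r) < ⊤)
    (hu : Continuous u) (hint : Integrable u μ) (x : T) {r : ℕ → ℝ} (hr₀ : ∀ n, 0 < r n)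
    (hr : Tendsto r atTop (𝓝 0)) :
    Tendsto (fun n => ⨍ z in ball x (r n), u z ∂μ) atTop (𝓝 (u x)) := by
  refine Metric.tendsto_atTop'.2 fun ε hε => ?_
  obtain ⟨δ, hδ, hclose⟩ := Metric.continuous_iff.1 hu x (ε / 2) (half_pos hε)
  obtain ⟨N, hN⟩ := eventually_atTop.1 (hr.eventually_lt_const hδ)
  refine ⟨N, fun n hn => ?_⟩
  obtain ⟨h₀, ht⟩ := hball x (r n) (hr₀ n)
  refine lt_of_le_of_lt (abs_setAverage_sub_le h₀.ne' ht.ne hint.integrableOn (half_pos hε).le ?_)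
    (half_lt_self hε)
  rw [← setLIntegral_const]
  refine setLIntegral_mono measurable_const fun z hz => ENNReal.ofReal_le_ofReal ?_
  exact (hclose z ((mem_ball.1 hz).trans (hN n hn.le))).le

lemma dist_setAverage_ball_le {C : ℝ≥0} (hC : IsUniformlyDoubling μ C)
    (hball : ∀ (x : T) (r : ℝ), 0 < r → 0 < μ (ball x r) ∧ μ (ball x r) < ⊤)
    (hu : Continuous u) (hint : Integrable u μ) {x : T} {E : ℝ} (hE : 0 ≤ E)
    (hosc : ∀ r : ℝ, 0 < r → ∫⁻ w in ball x r, ENNReal.ofReal |u w - ⨍ v in ball x r, u v ∂μ| ∂μ ≤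
      ENNReal.ofReal (E * r) * μ (ball x r)) {R : ℝ} (hR : 0 < R) :
    dist (⨍ v in ball x R, u v ∂μ) (u x) ≤ 2 * C * E * R := by
  have hpos : ∀ n : ℕ, 0 < R / 2 ^ n := fun n => by positivity
  have hzero : Tendsto (fun n : ℕ => R / 2 ^ n) atTop (𝓝 0) :=
    tendsto_const_nhds.div_atTop (tendsto_pow_atTop_atTop_of_one_lt one_lt_two)
  have hstep : ∀ n : ℕ, dist (⨍ v in ball x (R / 2 ^ n), u v ∂μ)
      (⨍ v in ball x (R / 2 ^ (n + 1)), u v ∂μ) ≤ 2 * C * E * R / 2 / 2 ^ n := by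
    intro n
    have htwice : R / 2 ^ n = 2 * (R / 2 ^ (n + 1)) := by rw [pow_succ]; field_simp
    refine (dist_setAverage_le (by positivity) (ball_subset_ball ?_) (hball x _ (hpos _)).1.ne'
      (hball x _ (hpos _)).2.ne ?_ hint.integrableOn (hosc _ (hpos n))).trans_eq (by ring)
    · linarith [hpos (n + 1)]
    · rw [htwice]
      exact hC x _ (hpos _)
  simpa only [pow_zero, div_one] using dist_le_of_le_geometric_two_of_tendsto₀ hstep
    (tendsto_setAverage_ball hball hu hint x hpos hzero)

lemma dist_le_of_oscillation_le {C : ℝ≥0} (hC : IsUniformlyDoubling μ C)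
    (hball : ∀ (x : T) (r : ℝ), 0 < r → 0 < μ (ball x r) ∧ μ (ball x r) < ⊤)
    (hu : Continuous u) (hint : Integrable u μ) {x y : T} {E : ℝ} (hE : 0 ≤ E)
    (hosc : ∀ z ∈ ({x, y} : Set T), ∀ r : ℝ, 0 < r →
      ∫⁻ w in ball z r, ENNReal.ofReal |u w - ⨍ v in ball z r, u v ∂μ| ∂μ ≤
        ENNReal.ofReal (E * r) * μ (ball z r)) :
    dist (u x) (u y) ≤ (6 * C + 2 * C ^ 2) * E * dist x y := by
  rcases (dist_nonneg (x := x) (y := y)).eq_or_lt with hd | hd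
  · rw [dist_eq_zero.1 hd.symm, dist_self, dist_self, mul_zero]
  set d := dist x y with hd_def
  have hx := dist_setAverage_ball_le hC hball hu hint hE (hosc x (by simp)) (R := 2 * d)
    (by positivity)
  have hy := dist_setAverage_ball_le hC hball hu hint hE (hosc y (by simp)) hd
  have hsub : ball y d ⊆ ball x (2 * d) :=
    ball_subset_ball' (by rw [dist_comm y x, ← hd_def]; linarith)
  have hM : μ (ball x (2 * d)) ≤ (C ^ 2 : ℝ≥0) * μ (ball y d) :=
    (measure_mono (ball_subset_ball' (by rw [← hd_def]; linarith))).trans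
      (hC.measure_ball_four_mul_le y hd)
  have hxy := dist_setAverage_le (E := E * (2 * d)) (by positivity) hsub (hball y d hd).1.ne'
    (hball x _ (by positivity)).2.ne hM hint.integrableOn (hosc x (by simp) _ (by positivity))
  calc dist (u x) (u y)
      ≤ dist (u x) (⨍ v in ball x (2 * d), u v ∂μ) +
          dist (⨍ v in ball x (2 * d), u v ∂μ) (⨍ v in ball y d, u v ∂μ) +
          dist (⨍ v in ball y d, u v ∂μ) (u y) := dist_triangle4 _ _ _ _
    _ ≤ 2 * C * E * (2 * d) + (C ^ 2 : ℝ≥0) * (E * (2 * d)) + 2 * C * E * d := by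
        rw [dist_comm (u x)]
        gcongr
    _ = (6 * C + 2 * C ^ 2) * E * d := by push_cast; ring

lemma SupportsPoincare.isOpenPosMeasure {CP lP : ℝ} (hP : SupportsPoincare μ CP lP) :
    μ.IsOpenPosMeasure where
  open_pos U hU hne := by
    obtain ⟨x, hx⟩ := hne
    obtain ⟨r, hr, hrU⟩ := Metric.isOpen_iff.1 hU x hx
    exact ((hP.1 x r hr).1.trans_le (measure_mono hrU)).ne'

lemma SupportsPoincare.isFiniteMeasure [BoundedSpace T] [Nonempty T] {CP lP : ℝ}
    (hP : SupportsPoincare μ CP lP) : IsFiniteMeasure μ where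
  measure_univ_lt_top := by
    obtain ⟨x⟩ := ‹Nonempty T›
    rw [← ball_eq_univ_of_diam_lt x (lt_add_one _)]
    exact (hP.1 x _ (by positivity)).2

lemma SupportsPoincare.oscillation_le {CP lP : ℝ} (hP : SupportsPoincare μ CP lP)
    (hu : LocallyIntegrable u μ) {g : T → ℝ≥0∞} (hg : Measurable g) (hug : IsUpperGradient u g)
    {lam : ℝ≥0} {x : T} (hx : maximalFunction μ g x ≤ lam) {r : ℝ} (hr : 0 < r) :
    ∫⁻ w in ball x r, ENNReal.ofReal |u w - ⨍ v in ball x r, u v ∂μ| ∂μ ≤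
      ENNReal.ofReal (2 * max CP 0 * lam * r) * μ (ball x r) := by
  have havg : (∫⁻ y in ball x (lP * r), g y ∂μ) / μ (ball x (lP * r)) ≤ lam := by
    rcases le_or_gt (lP * r) 0 with h | h
    · simp only [ball_eq_empty.2 h, Measure.restrict_empty, lintegral_zero_measure,
        ENNReal.zero_div, zero_le]
    · exact (setLIntegral_ball_div_le_maximalFunction g x h).trans hx
  have hdiam : CP * diam (ball x r) ≤ max CP 0 * (2 * r) :=
    mul_le_mul (le_max_left _ _) (diam_ball hr.le) diam_nonneg (le_max_right _ _)
  obtain ⟨h₀, ht⟩ := hP.1 x r hr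
  rw [← ENNReal.div_le_iff h₀.ne' ht.ne]
  calc _ ≤ ENNReal.ofReal (CP * diam (ball x r)) *
        ((∫⁻ y in ball x (lP * r), g y ∂μ) / μ (ball x (lP * r))) := hP.2 u g hu hg hug x r hr
    _ ≤ ENNReal.ofReal (max CP 0 * (2 * r)) * lam := by gcongr
    _ = ENNReal.ofReal (2 * max CP 0 * lam * r) := by
        rw [← ENNReal.ofReal_coe_nnreal (p := lam), ← ENNReal.ofReal_mul (by positivity)]
        ring_nf

lemma dist_le_of_maximalFunction_le [BorelSpace T] [CompactSpace T] [IsFiniteMeasure μ] {C : ℝ≥0}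
    (hC : IsUniformlyDoubling μ C) {CP lP : ℝ} (hP : SupportsPoincare μ CP lP)
    (hu : Continuous u) {g : T → ℝ≥0∞} (hg : Measurable g) (hug : IsUpperGradient u g)
    {lam : ℝ≥0} {x y : T} (hx : maximalFunction μ g x ≤ lam) (hy : maximalFunction μ g y ≤ lam) :
    dist (u x) (u y) ≤ (6 * C + 2 * C ^ 2) * (2 * max CP 0 * lam) * dist x y := by
  have hint : Integrable u μ :=
    hu.integrable_of_hasCompactSupport (HasCompactSupport.of_compactSpace u)
  refine dist_le_of_oscillation_le hC hP.1 hu hint (by positivity) ?_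
  rintro z (rfl | rfl) r hr
  · exact hP.oscillation_le hint.locallyIntegrable hg hug hx hr
  · exact hP.oscillation_le hint.locallyIntegrable hg hug hy hr

end Telescoping

/-! ### Lower semicontinuous functions as suprema of Lipschitz functions -/

section LipschitzApprox

variable {X : Type*} [PseudoEMetricSpace X]

/-- The largest `n`-Lipschitz minorant of `min ρ (n + 1)`. For lower semicontinuous `ρ` these
increase to `ρ`; truncating at `n + 1` rather than `n` preserves a lower bound `1 ≤ ρ`. -/
def lipschitzApprox (ρ : X → ℝ≥0∞) (n : ℕ) (x : X) : ℝ≥0∞ :=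
  ⨅ y, min (ρ y) (n + 1) + n * edist x y

lemma lipschitzApprox_le_min (ρ : X → ℝ≥0∞) (n : ℕ) (x : X) :
    lipschitzApprox ρ n x ≤ min (ρ x) (n + 1) :=
  iInf_le_of_le x (by rw [edist_self, mul_zero, add_zero])

lemma lipschitzApprox_ne_top (ρ : X → ℝ≥0∞) (n : ℕ) (x : X) : lipschitzApprox ρ n x ≠ ⊤ :=
  ne_top_of_le_ne_top (by finiteness) ((lipschitzApprox_le_min ρ n x).trans (min_le_right _ _))

lemma le_lipschitzApprox {ρ : X → ℝ≥0∞} (hρ : ∀ x, 1 ≤ ρ x) (n : ℕ) (x : X) :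
    1 ≤ lipschitzApprox ρ n x :=
  le_iInf fun y => le_add_right (le_min (hρ y) le_add_self)

lemma continuous_lipschitzApprox (ρ : X → ℝ≥0∞) (n : ℕ) : Continuous (lipschitzApprox ρ n) := by
  refine continuous_of_le_add_edist n (ENNReal.natCast_ne_top n) fun x y => ?_
  rw [lipschitzApprox, lipschitzApprox, ENNReal.iInf_add]
  refine iInf_mono fun z => ?_
  rw [add_assoc, ← mul_add, add_comm (edist y z)]
  gcongr
  exact edist_triangle x y z

lemma monotone_lipschitzApprox (ρ : X → ℝ≥0∞) : Monotone (lipschitzApprox ρ) :=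
  fun _ _ _ _ => iInf_mono fun _ => by gcongr

lemma le_iSup_lipschitzApprox {ρ : X → ℝ≥0∞} (hρ : LowerSemicontinuous ρ) (x : X) :
    ρ x ≤ ⨆ n, lipschitzApprox ρ n x := by
  refine le_of_forall_lt fun c hc => ?_
  obtain ⟨c', hcc', hc'⟩ := exists_between hc
  refine hcc'.trans_le ?_
  have hc'_top : c' ≠ ⊤ := hc'.ne_top
  obtain ⟨R, hR, hball⟩ := EMetric.mem_nhds_iff.1 (hρ x c' hc')
  obtain ⟨r, hr, hrR⟩ := ENNReal.lt_iff_exists_nnreal_btwn.1 hR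
  obtain ⟨n, hn⟩ := ENNReal.exists_nat_gt (r := c' + c' / r)
    (ENNReal.add_ne_top.2 ⟨hc'_top, ENNReal.div_ne_top hc'_top hr.ne'⟩)
  refine le_iSup_of_le n (le_iInf fun y => ?_)
  rcases lt_or_ge (edist y x) (r : ℝ≥0∞) with hy | hy
  · exact le_add_right (le_min (hball (hy.trans hrR)).le
      (le_self_add.trans (hn.le.trans le_self_add)))
  · refine le_add_left ?_
    calc c' = c' / r * r := (ENNReal.div_mul_cancel hr.ne' ENNReal.coe_ne_top).symm
      _ ≤ c' / r * edist x y := by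
          rw [edist_comm]
          gcongr
      _ ≤ n * edist x y := by
          gcongr
          exact le_add_self.trans hn.le

end LipschitzApprox

/-! ### Coarse paths -/

section CoarsePaths

lemma lintegral_Icc_ite {X : Type*} (φ : X → ℝ≥0) {ℓ d : ℝ} (hℓ : 0 ≤ ℓ) (hd : 0 ≤ d)
    (γ : ℝ → X) (z : X) : ∫⁻ t in Icc 0 (ℓ + d), (φ (if t ≤ ℓ then γ t else z) : ℝ≥0∞) =
      (∫⁻ t in Icc 0 ℓ, (φ (γ t) : ℝ≥0∞)) + φ z * ENNReal.ofReal d := by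
  rw [← lintegral_Icc_add _ hℓ (le_add_of_nonneg_right hd)]
  congr 1
  · exact setLIntegral_congr_fun measurableSet_Icc fun t ht => by rw [if_pos ht.2]
  · rw [← Measure.restrict_congr_set (Ioc_ae_eq_Icc (a := ℓ)),
      setLIntegral_congr_fun (g := fun _ => (φ z : ℝ≥0∞)) measurableSet_Ioc
        fun t ht => by rw [if_neg ht.1.not_ge],
      setLIntegral_const, Real.volume_Ioc, add_sub_cancel_left]

variable {T : Type*} [MetricSpace T] [MeasurableSpace T]

/-- A possibly discontinuous path from `x` to `y`, running during the time interval `[0, ℓ]` and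
constant outside of it, which is `1`-Lipschitz up to an additive error `ε`. The last field is what
makes extension by a jump of size at most `ε` possible without increasing the error. -/
structure CoarsePath (ε ℓ : ℝ) (x y : T) (γ : ℝ → T) : Prop where
  measurable : Measurable γ
  nonneg : 0 ≤ ℓ
  eq_start : ∀ t ≤ 0, γ t = x
  eq_finish : ∀ t, ℓ ≤ t → γ t = y
  dist_le : ∀ s t, s ≤ t → dist (γ s) (γ t) ≤ t - s + ε
  dist_finish_le : ∀ s ≤ ℓ, dist (γ s) y ≤ ℓ - s

lemma CoarsePath.dist_le_dist_add {ε ℓ : ℝ} {x y : T} {γ : ℝ → T}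
    (h : CoarsePath ε ℓ x y γ) (s t : ℝ) : dist (γ s) (γ t) ≤ dist s t + ε := by
  rw [Real.dist_eq]
  rcases le_total s t with hst | hst
  · rw [abs_sub_comm, abs_of_nonneg (sub_nonneg.2 hst)]
    exact h.dist_le s t hst
  · rw [dist_comm, abs_of_nonneg (sub_nonneg.2 hst)]
    exact h.dist_le t s hst

lemma CoarsePath.const {ε : ℝ} (hε : 0 ≤ ε) (x : T) : CoarsePath ε 0 x x fun _ => x where
  measurable := measurable_const
  nonneg := le_rfl
  eq_start _ _ := rfl
  eq_finish _ _ := rfl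
  dist_le s t hst := by rw [dist_self]; linarith
  dist_finish_le s hs := by rw [dist_self]; linarith

lemma CoarsePath.extend {ε ℓ : ℝ} {x y z : T} {γ : ℝ → T} (h : CoarsePath ε ℓ x y γ)
    (hz : dist y z ≤ ε) :
    CoarsePath ε (ℓ + dist y z) x z fun t => if t ≤ ℓ then γ t else z where
  measurable := Measurable.ite measurableSet_Iic h.measurable measurable_const
  nonneg := add_nonneg h.nonneg dist_nonneg
  eq_start t ht := by rw [if_pos (ht.trans h.nonneg), h.eq_start t ht]
  eq_finish t ht := by
    split_ifs with htℓ
    · have hyz : dist y z ≤ 0 := by linarith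
      rw [h.eq_finish t (by linarith [dist_nonneg (x := y) (y := z)]), dist_le_zero.1 hyz]
    · rfl
  dist_le s t hst := by
    have hyz := dist_nonneg (x := y) (y := z)
    split_ifs with hs ht ht
    · exact h.dist_le s t hst
    · linarith [h.dist_finish_le s hs, dist_triangle (γ s) y z, not_le.1 ht]
    · exact absurd (hst.trans ht) hs
    · rw [dist_self]; linarith
  dist_finish_le s hs := by
    split_ifs with hsℓ
    · linarith [h.dist_finish_le s hsℓ, dist_triangle (γ s) y z]
    · rw [dist_self]; linarith

/-- The infimum of the costs `∫ φ ds` of coarse paths from `x` to `y`. -/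
def coarseDist (φ : T → ℝ≥0) (ε : ℝ) (x y : T) : ℝ≥0∞ :=
  ⨅ (ℓ : ℝ) (γ : ℝ → T) (_ : CoarsePath ε ℓ x y γ), ∫⁻ t in Icc 0 ℓ, (φ (γ t) : ℝ≥0∞)

lemma coarseDist_self (φ : T → ℝ≥0) {ε : ℝ} (hε : 0 ≤ ε) (x : T) : coarseDist φ ε x x = 0 := by
  refine le_antisymm (iInf₂_le_of_le 0 _ (iInf_le_of_le (CoarsePath.const hε x) ?_)) zero_le
  rw [setLIntegral_const, Icc_self, Real.volume_singleton, mul_zero]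

lemma coarseDist_le_add (φ : T → ℝ≥0) {ε : ℝ} (x : T) {y z : T} (hz : dist y z ≤ ε) :
    coarseDist φ ε x z ≤ coarseDist φ ε x y + φ z * edist y z := by
  conv_rhs => rw [coarseDist]
  simp only [ENNReal.iInf_add]
  refine le_iInf fun ℓ => le_iInf₂ fun γ h => ?_
  rw [edist_dist, ← lintegral_Icc_ite φ h.nonneg dist_nonneg]
  exact iInf₂_le_of_le _ _ (iInf_le _ (h.extend hz))

/-- `coarseDist`, truncated at `M` so as to be real-valued. -/
def truncCoarseDist (φ : T → ℝ≥0) (ε : ℝ) (M : ℝ≥0) (x y : T) : ℝ :=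
  (min (coarseDist φ ε x y) M).toReal

lemma truncCoarseDist_le_add (φ : T → ℝ≥0) {ε : ℝ} {M : ℝ≥0} (x : T) {y z : T}
    (hz : dist y z ≤ ε) :
    truncCoarseDist φ ε M x z ≤ truncCoarseDist φ ε M x y + φ z * dist y z := by
  have hne : min (coarseDist φ ε x y) M ≠ ⊤ :=
    ne_top_of_le_ne_top ENNReal.coe_ne_top (min_le_right _ _)
  have hle : min (coarseDist φ ε x z) M ≤ min (coarseDist φ ε x y) M + φ z * edist y z := by
    rw [← min_add_add_right]
    exact min_le_min (coarseDist_le_add φ x hz) le_self_add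
  have hle' := ENNReal.toReal_mono (by finiteness) hle
  rwa [ENNReal.toReal_add hne (by finiteness), ENNReal.toReal_mul, ENNReal.coe_toReal,
    edist_dist, ENNReal.toReal_ofReal dist_nonneg] at hle'

lemma edist_truncCoarseDist_le (φ : T → ℝ≥0) {ε : ℝ} {M : ℝ≥0} (x : T) {y z : T}
    (hz : dist y z ≤ ε) {K : ℝ≥0} (hyK : φ y ≤ K) (hzK : φ z ≤ K) :
    edist (truncCoarseDist φ ε M x y) (truncCoarseDist φ ε M x z) ≤ K * edist y z := by
  rw [edist_nndist, edist_nndist, ← ENNReal.coe_mul, ENNReal.coe_le_coe, ← NNReal.coe_le_coe,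
    NNReal.coe_mul, coe_nndist, coe_nndist, Real.dist_eq, abs_sub_le_iff]
  have hyz := truncCoarseDist_le_add φ (M := M) x hz
  have hzy := truncCoarseDist_le_add φ (M := M) x ((dist_comm z y).trans_le hz)
  rw [dist_comm z y] at hzy
  have hyK' : φ y * dist y z ≤ K * dist y z := by gcongr
  have hzK' : φ z * dist y z ≤ K * dist y z := by gcongr
  constructor <;> linarith

lemma continuous_truncCoarseDist {φ : T → ℝ≥0} (hφ : Continuous φ) {ε : ℝ} (hε : 0 < ε) (M : ℝ≥0)
    (x : T) : Continuous (truncCoarseDist φ ε M x) := by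
  refine continuous_iff_continuousAt.2 fun y => ?_
  have hlip : LipschitzOnWith (φ y + 1) (truncCoarseDist φ ε M x)
      (ball y (ε / 2) ∩ {z | φ z < φ y + 1}) := fun z hz w hw => by
    refine edist_truncCoarseDist_le φ x ?_ hz.2.le hw.2.le
    linarith [dist_triangle_right z w y, mem_ball.1 hz.1, mem_ball.1 hw.1]
  refine hlip.continuousOn.continuousAt (inter_mem (ball_mem_nhds y (by linarith)) ?_)
  exact hφ.continuousAt.eventually_lt continuousAt_const (lt_add_one _)

/-- As `φ` is continuous and positive, it varies by a factor of at most `2` along short subpaths. -/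
lemma isUpperGradient_truncCoarseDist {φ : T → ℝ≥0} (hφ : Continuous φ) (hφ_pos : ∀ x, 0 < φ x)
    {ε : ℝ} (hε : 0 < ε) (M : ℝ≥0) (x : T) :
    IsUpperGradient (truncCoarseDist φ ε M x) (fun y => 2 * (φ y : ℝ≥0∞)) := by
  intro γ
  refine edist_le_lintegral_of_forall_nhdsWithin_Icc
    (H := fun t => truncCoarseDist φ ε M x (γ.toFun t))
    (ρ := fun t => 2 * (φ (γ.toFun t) : ℝ≥0∞)) γ.hab fun t ht => ?_
  set c : ℝ := (φ (γ.toFun t) : ℝ)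
  have hc : 0 < c := NNReal.coe_pos.2 (hφ_pos _)
  have hφγ : ContinuousOn (fun r => (φ (γ.toFun r) : ℝ)) (Icc γ.a γ.b) :=
    NNReal.continuous_coe.comp_continuousOn (hφ.comp_continuousOn γ.lip.continuousOn)
  obtain ⟨δ, hδ, hclose⟩ := Metric.continuousOn_iff.1 hφγ t ht (c / 3) (by positivity)
  refine ⟨Icc γ.a γ.b ∩ ball t (min δ (ε / 2)),
    inter_mem_nhdsWithin _ (ball_mem_nhds t (by positivity)), ?_⟩
  rintro r ⟨hr, hrt⟩ s ⟨hs, hst⟩ hrs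
  have hφ_close : ∀ w ∈ Icc r s, |φ (γ.toFun w) - c| < c / 3 := fun w hw =>
    hclose w (ordConnected_Icc.out hr hs hw) <| ball_subset_ball (min_le_left _ _) <|
      (convex_ball t _).ordConnected.out hrt hst hw
  set K : ℝ≥0 := max (φ (γ.toFun r)) (φ (γ.toFun s))
  have hK : ∀ w ∈ Icc r s, K ≤ 2 * φ (γ.toFun w) := fun w hw => by
    have hr' := abs_lt.1 (hφ_close r ⟨le_rfl, hrs⟩)
    have hs' := abs_lt.1 (hφ_close s ⟨hrs, le_rfl⟩)
    have hw' := abs_lt.1 (hφ_close w hw)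
    refine max_le ?_ ?_ <;> rw [← NNReal.coe_le_coe] <;> push_cast <;>
      linarith [hw'.1, hr'.2, hs'.2]
  have hrs_lip : edist (γ.toFun r) (γ.toFun s) ≤ edist r s := by
    simpa only [ENNReal.coe_one, one_mul] using γ.lip hr hs
  have hrs_dist : dist (γ.toFun r) (γ.toFun s) ≤ ε := by
    have hr_ε := (mem_ball.1 hrt).trans_le (min_le_right _ _)
    have hs_ε := (mem_ball.1 hst).trans_le (min_le_right _ _)
    rw [← edist_le_ofReal hε.le]
    refine hrs_lip.trans ?_
    rw [edist_le_ofReal hε.le]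
    linarith [dist_triangle_right r s t]
  calc edist (truncCoarseDist φ ε M x (γ.toFun r)) (truncCoarseDist φ ε M x (γ.toFun s))
      ≤ K * edist (γ.toFun r) (γ.toFun s) :=
        edist_truncCoarseDist_le φ x hrs_dist (le_max_left _ _) (le_max_right _ _)
    _ ≤ K * edist r s := by gcongr
    _ = ∫⁻ _ in Icc r s, (K : ℝ≥0∞) := (lintegral_Icc_const _ hrs).symm
    _ ≤ ∫⁻ w in Icc r s, 2 * (φ (γ.toFun w) : ℝ≥0∞) :=
        setLIntegral_mono' measurableSet_Icc fun w hw => by exact_mod_cast hK w hw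

end CoarsePaths

/-! ### Paths of controlled integral between points of small maximal function -/

section ControlledPaths

/-- An asymptotic version of the Arzelà–Ascoli theorem: the `β n` need not be continuous. -/
lemma exists_subseq_tendsto_of_dist_le {X Y : Type*} [PseudoMetricSpace X]
    [TopologicalSpace.SeparableSpace X] [MetricSpace Y] [CompactSpace Y] {β : ℕ → X → Y}
    {ε : ℕ → ℝ} (hε : Tendsto ε atTop (𝓝 0))
    (hβ : ∀ n s t, dist (β n s) (β n t) ≤ dist s t + ε n) :
    ∃ (α : X → Y) (ψ : ℕ → ℕ), StrictMono ψ ∧ LipschitzWith 1 α ∧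
      ∀ t, Tendsto (fun k => β (ψ k) t) atTop (𝓝 (α t)) := by
  obtain ⟨D, hD, hdense⟩ := TopologicalSpace.exists_countable_dense X
  have : Countable D := hD
  obtain ⟨b, ψ, hψ, hlim⟩ := CompactSpace.tendsto_subseq fun n (q : D) => β n q
  rw [tendsto_pi_nhds] at hlim
  have hεψ : Tendsto (fun k => ε (ψ k)) atTop (𝓝 0) := hε.comp hψ.tendsto_atTop
  have hcauchy : ∀ t, CauchySeq fun k => β (ψ k) t := fun t => by
    refine Metric.cauchySeq_iff.2 fun δ hδ => ?_
    obtain ⟨q, hqD, hq⟩ := hdense.exists_dist_lt t (show 0 < δ / 5 by linarith)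
    obtain ⟨N, hN⟩ := Metric.cauchySeq_iff.1 (hlim ⟨q, hqD⟩).cauchySeq (δ / 5) (by linarith)
    obtain ⟨N', hN'⟩ := eventually_atTop.1
      (hεψ.eventually_lt_const (show (0 : ℝ) < δ / 5 by linarith))
    refine ⟨max N N', fun m hm n hn => ?_⟩
    have hmn : dist (β (ψ m) q) (β (ψ n) q) < δ / 5 :=
      hN m (le_of_max_le_left hm) n (le_of_max_le_left hn)
    have hm_q := hβ (ψ m) t q
    have hn_q := hβ (ψ n) q t
    rw [dist_comm q t] at hn_q
    linarith [dist_triangle4 (β (ψ m) t) (β (ψ m) q) (β (ψ n) q) (β (ψ n) t),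
      hN' m (le_of_max_le_right hm), hN' n (le_of_max_le_right hn)]
  choose α hα using fun t => cauchySeq_tendsto_of_complete (hcauchy t)
  refine ⟨α, ψ, hψ, LipschitzWith.of_dist_le_mul fun s t => ?_, hα⟩
  rw [NNReal.coe_one, one_mul]
  refine le_of_tendsto_of_tendsto' ((hα s).dist (hα t)) ?_ fun k => hβ (ψ k) s t
  simpa only [add_zero] using hεψ.const_add (dist s t)

lemma lintegral_Icc_iSup_le_liminf {X : Type*} [TopologicalSpace X] [MeasurableSpace X]
    [OpensMeasurableSpace X] {φ : ℕ → X → ℝ≥0∞} (hφ : ∀ n, Continuous (φ n)) (hmono : Monotone φ)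
    {γ : ℕ → ℝ → X} {α : ℝ → X} {ℓ : ℕ → ℝ} {L : ℝ} (hγ : ∀ k, Measurable (γ k))
    (hα : ∀ t, Tendsto (fun k => γ k t) atTop (𝓝 (α t))) (hℓ : Tendsto ℓ atTop (𝓝 L)) :
    ∫⁻ t in Icc 0 L, ⨆ n, φ n (α t) ≤ liminf (fun k => ∫⁻ t in Icc 0 (ℓ k), φ k (γ k t)) atTop := by
  set F : ℕ → ℝ → ℝ≥0∞ := fun k => (Icc 0 (ℓ k)).indicator fun t => φ k (γ k t)
  have hF : ∀ k, Measurable (F k) := fun k =>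
    ((hφ k).measurable.comp (hγ k)).indicator measurableSet_Icc
  have hpointwise : ∀ t ∈ Ico 0 L, ⨆ n, φ n (α t) ≤ liminf (fun k => F k t) atTop := by
    refine fun t ht => iSup_le fun n => ?_
    rw [← (((hφ n).tendsto _).comp (hα t)).liminf_eq]
    refine liminf_le_liminf ?_
    filter_upwards [hℓ.eventually_const_lt ht.2, eventually_ge_atTop n] with k hk hnk
    simp only [F, indicator_of_mem (show t ∈ Icc 0 (ℓ k) from ⟨ht.1, hk.le⟩)]
    exact hmono hnk _
  calc ∫⁻ t in Icc 0 L, ⨆ n, φ n (α t)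
      = ∫⁻ t in Ico 0 L, ⨆ n, φ n (α t) := by rw [Measure.restrict_congr_set Ico_ae_eq_Icc]
    _ ≤ ∫⁻ t in Ico 0 L, liminf (fun k => F k t) atTop :=
        setLIntegral_mono' measurableSet_Ico hpointwise
    _ ≤ ∫⁻ t, liminf (fun k => F k t) atTop := setLIntegral_le_lintegral _ _
    _ ≤ liminf (fun k => ∫⁻ t, F k t) atTop := lintegral_liminf_le hF
    _ = liminf (fun k => ∫⁻ t in Icc 0 (ℓ k), φ k (γ k t)) atTop := by
        simp only [F, lintegral_indicator measurableSet_Icc]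

/-- The constant path at `x`, as a path of length zero. -/
def UPath.const {X : Type*} [PseudoMetricSpace X] (x : X) : UPath X where
  a := 0
  b := 0
  hab := le_rfl
  toFun := fun _ => x
  lip := (LipschitzWith.const' x).lipschitzOnWith

lemma UPath.integral_const {X : Type*} [PseudoMetricSpace X] (x : X) (ρ : X → ℝ≥0∞) :
    (UPath.const x).integral ρ = 0 :=
  setLIntegral_measure_zero _ _ ((congr_arg volume (Icc_self 0)).trans Real.volume_singleton)

variable {T : Type*} [MetricSpace T] [MeasurableSpace T] [CompactSpace T]

lemma CoarsePath.exists_subseq_tendsto {ε ℓ : ℕ → ℝ} {x y : T} {γ : ℕ → ℝ → T}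
    (hγ : ∀ n, CoarsePath (ε n) (ℓ n) x y (γ n)) (hε : Tendsto ε atTop (𝓝 0)) {B : ℝ}
    (hℓB : ∀ n, ℓ n ≤ B) :
    ∃ (β : UPath T) (ψ : ℕ → ℕ), StrictMono ψ ∧ β.start = x ∧ β.finish = y ∧ β.a = 0 ∧
      Tendsto (fun k => ℓ (ψ k)) atTop (𝓝 β.b) ∧
      ∀ t, Tendsto (fun k => γ (ψ k) t) atTop (𝓝 (β.toFun t)) := by
  obtain ⟨L, hL, ψ₁, hψ₁, hℓ⟩ := isCompact_Icc.tendsto_subseq fun n => ⟨(hγ n).nonneg, hℓB n⟩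
  obtain ⟨α, ψ₂, hψ₂, hα, hlim⟩ := exists_subseq_tendsto_of_dist_le
    (hε.comp hψ₁.tendsto_atTop) fun n => (hγ (ψ₁ n)).dist_le_dist_add
  replace hℓ : Tendsto (fun k => ℓ (ψ₁ (ψ₂ k))) atTop (𝓝 L) := hℓ.comp hψ₂.tendsto_atTop
  have hαL : α L = y := by
    refine tendsto_nhds_unique (hlim L) (tendsto_iff_dist_tendsto_zero.2 ?_)
    have hbound : Tendsto (fun k => dist L (ℓ (ψ₁ (ψ₂ k))) + ε (ψ₁ (ψ₂ k))) atTop (𝓝 0) := by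
      simpa only [dist_self, add_zero, Function.comp_apply] using
        ((tendsto_const_nhds (x := L)).dist hℓ).add
        (hε.comp (hψ₁.comp hψ₂).tendsto_atTop)
    refine squeeze_zero (fun _ => dist_nonneg) (fun k => ?_) hbound
    have hγk := hγ (ψ₁ (ψ₂ k))
    simpa only [hγk.eq_finish _ le_rfl] using hγk.dist_le_dist_add L (ℓ (ψ₁ (ψ₂ k)))
  have hα₀ : α 0 = x := tendsto_nhds_unique (hlim 0)
    (tendsto_const_nhds.congr fun k => ((hγ (ψ₁ (ψ₂ k))).eq_start 0 le_rfl).symm)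
  exact ⟨⟨0, L, hL.1, α, hα.lipschitzOnWith⟩, ψ₁ ∘ ψ₂, hψ₁.comp hψ₂, hα₀, hαL, rfl, hℓ, hlim⟩

variable [BorelSpace T]

lemma exists_uPath_of_coarsePath {φ : ℕ → T → ℝ≥0} (hφ : ∀ n, Continuous (φ n))
    (hφ₁ : ∀ n x, 1 ≤ φ n x) (hmono : Monotone φ) {ε ℓ : ℕ → ℝ} {x y : T} {γ : ℕ → ℝ → T}
    (hγ : ∀ n, CoarsePath (ε n) (ℓ n) x y (γ n)) (hε : Tendsto ε atTop (𝓝 0)) {B : ℝ≥0}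
    (hB : ∀ n, ∫⁻ t in Icc 0 (ℓ n), (φ n (γ n t) : ℝ≥0∞) ≤ B) :
    ∃ β : UPath T, β.start = x ∧ β.finish = y ∧
      β.integral (fun z => ⨆ n, (φ n z : ℝ≥0∞)) ≤ B := by
  have hℓB : ∀ n, ℓ n ≤ B := fun n => by
    rw [← ENNReal.ofReal_le_ofReal_iff B.coe_nonneg, ENNReal.ofReal_coe_nnreal]
    calc ENNReal.ofReal (ℓ n) = ∫⁻ _ in Icc 0 (ℓ n), 1 := by
          rw [setLIntegral_one, Real.volume_Icc, sub_zero]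
      _ ≤ ∫⁻ t in Icc 0 (ℓ n), (φ n (γ n t) : ℝ≥0∞) :=
          lintegral_mono fun t => ENNReal.one_le_coe_iff.2 (hφ₁ n _)
      _ ≤ B := hB n
  obtain ⟨β, ψ, hψ, hstart, hfinish, hβa, hℓ, hlim⟩ := CoarsePath.exists_subseq_tendsto hγ hε hℓB
  refine ⟨β, hstart, hfinish, ?_⟩
  calc β.integral (fun z => ⨆ n, (φ n z : ℝ≥0∞))
      ≤ β.integral (fun z => ⨆ n, (φ (ψ n) z : ℝ≥0∞)) :=
        lintegral_mono fun t => iSup_mono fun n => ENNReal.coe_le_coe.2 (hmono (hψ.id_le n) _)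
    _ ≤ liminf (fun k => ∫⁻ t in Icc 0 (ℓ (ψ k)), (φ (ψ k) (γ (ψ k) t) : ℝ≥0∞)) atTop := by
        rw [UPath.integral, hβa]
        exact lintegral_Icc_iSup_le_liminf
          (fun n => ENNReal.continuous_coe.comp (hφ (ψ n)))
          (fun m n hmn z => ENNReal.coe_le_coe.2 (hmono (hψ.monotone hmn) z))
          (fun k => (hγ (ψ k)).measurable) hlim hℓ
    _ ≤ B := liminf_le_of_le (by isBoundedDefault) fun b hb => by
        obtain ⟨k, hk⟩ := hb.exists
        exact hk.trans (hB _)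

variable {μ : Measure T} [IsFiniteMeasure μ] {C : ℝ≥0} {CP lP : ℝ}

/-- The coarse distance to `x` is continuous with upper gradient `2 φ`, so the Poincaré inequality
bounds its value at `y`. -/
lemma exists_coarsePath (hC : IsUniformlyDoubling μ C) (hP : SupportsPoincare μ CP lP)
    {φ : T → ℝ≥0} (hφ : Continuous φ) (hφ_pos : ∀ x, 0 < φ x) {lam : ℝ≥0} {x y : T}
    (hx : maximalFunction μ (fun z => φ z) x ≤ lam) (hy : maximalFunction μ (fun z => φ z) y ≤ lam)
    {B : ℝ≥0}
    (hB : (6 * C + 2 * C ^ 2) * (4 * max CP 0 * lam) * dist x y < B) {ε : ℝ} (hε : 0 < ε) :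
    ∃ ℓ γ, CoarsePath ε ℓ x y γ ∧ ∫⁻ t in Icc 0 ℓ, (φ (γ t) : ℝ≥0∞) ≤ B := by
  have hmax : ∀ z, maximalFunction μ (fun z => φ z) z ≤ lam →
      maximalFunction μ (fun z => 2 * (φ z : ℝ≥0∞)) z ≤ (2 * lam : ℝ≥0) := fun z hz => by
    rw [maximalFunction_const_mul ENNReal.ofNat_ne_top, ENNReal.coe_mul, ENNReal.coe_ofNat]
    gcongr
  have hdist := dist_le_of_maximalFunction_le hC hP (continuous_truncCoarseDist hφ hε B x)
    (by fun_prop) (isUpperGradient_truncCoarseDist hφ hφ_pos hε B x) (hmax x hx) (hmax y hy)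
  have hzero : truncCoarseDist φ ε B x x = 0 := by
    rw [truncCoarseDist, coarseDist_self φ hε.le, min_eq_left zero_le, ENNReal.toReal_zero]
  have htrunc : truncCoarseDist φ ε B x y < B := by
    rw [hzero, dist_zero_left, Real.norm_eq_abs, NNReal.coe_mul, NNReal.coe_ofNat] at hdist
    refine (le_abs_self _).trans_lt (hdist.trans_lt ?_)
    linarith
  have hcost : coarseDist φ ε x y < B := by
    by_contra! hle
    rw [truncCoarseDist, min_eq_right hle, ENNReal.coe_toReal] at htrunc
    exact htrunc.false
  simp only [coarseDist, iInf_lt_iff] at hcost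
  obtain ⟨ℓ, γ, hγ, hlt⟩ := hcost
  exact ⟨ℓ, γ, hγ, hlt.le⟩

lemma exists_uPath_integral_le_of_lt (hC : IsUniformlyDoubling μ C) (hP : SupportsPoincare μ CP lP)
    {ρ : T → ℝ≥0∞} (hρ : LowerSemicontinuous ρ) (hρ₁ : ∀ x, 1 ≤ ρ x) {lam : ℝ≥0} {x y : T}
    (hx : maximalFunction μ ρ x ≤ lam) (hy : maximalFunction μ ρ y ≤ lam) {B : ℝ≥0}
    (hB : (6 * C + 2 * C ^ 2) * (4 * max CP 0 * lam) * dist x y < B) :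
    ∃ γ : UPath T, γ.start = x ∧ γ.finish = y ∧ γ.integral ρ ≤ B := by
  set φ : ℕ → T → ℝ≥0 := fun n z => (lipschitzApprox ρ n z).toNNReal
  have hcoe : ∀ n z, (φ n z : ℝ≥0∞) = lipschitzApprox ρ n z :=
    fun n z => ENNReal.coe_toNNReal (lipschitzApprox_ne_top ρ n z)
  have hφ : ∀ n, Continuous (φ n) := fun n =>
    ENNReal.continuousOn_toNNReal.comp_continuous (continuous_lipschitzApprox ρ n)
      (lipschitzApprox_ne_top ρ n)
  have hφ_mono : Monotone φ := fun m n hmn z =>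
    ENNReal.toNNReal_mono (lipschitzApprox_ne_top ρ n z) (monotone_lipschitzApprox ρ hmn z)
  have hφ₁ : ∀ n z, 1 ≤ φ n z := fun n z => by
    rw [← ENNReal.one_le_coe_iff, hcoe]
    exact le_lipschitzApprox hρ₁ n z
  have hmax : ∀ n z, maximalFunction μ ρ z ≤ lam → maximalFunction μ (fun w => φ n w) z ≤ lam :=
    fun n z hz => (maximalFunction_mono (fun w => (hcoe n w).trans_le
      ((lipschitzApprox_le_min ρ n w).trans (min_le_left _ _))) z).trans hz
  choose ℓ γ hγ hcost using fun n : ℕ => exists_coarsePath hC hP (hφ n)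
    (fun z => zero_lt_one.trans_le (hφ₁ n z)) (hmax n x hx) (hmax n y hy) hB
    (Nat.one_div_pos_of_nat (n := n))
  obtain ⟨β, hstart, hfinish, hβ⟩ :=
    exists_uPath_of_coarsePath hφ hφ₁ hφ_mono hγ tendsto_one_div_add_atTop_nhds_zero_nat hcost
  refine ⟨β, hstart, hfinish, le_trans (lintegral_mono fun t => ?_) hβ⟩
  simp only [hcoe]
  exact le_iSup_lipschitzApprox hρ _

lemma exists_uPath_integral_le (hC : IsUniformlyDoubling μ C) (hP : SupportsPoincare μ CP lP) :
    ∃ K : ℝ≥0, ∀ ρ : T → ℝ≥0∞, LowerSemicontinuous ρ → (∀ x, 1 ≤ ρ x) → ∀ (lam : ℝ≥0) (x y : T),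
      maximalFunction μ ρ x ≤ lam → maximalFunction μ ρ y ≤ lam →
      ∃ γ : UPath T, γ.start = x ∧ γ.finish = y ∧ γ.integral ρ ≤ K * lam * edist x y := by
  refine ⟨(6 * C + 2 * C ^ 2) * (4 * CP.toNNReal) + 1, fun ρ hρ hρ₁ lam x y hx hy => ?_⟩
  rcases eq_or_ne x y with rfl | hxy
  · exact ⟨UPath.const x, rfl, rfl, (UPath.integral_const x ρ).trans_le zero_le⟩
  have := hP.isOpenPosMeasure
  have hlam : (1 : ℝ) ≤ lam :=
    mod_cast ENNReal.one_le_coe_iff.1 ((le_maximalFunction_of_forall_le hρ₁ x).trans hx)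
  rw [edist_nndist, ← ENNReal.coe_mul, ← ENNReal.coe_mul]
  refine exists_uPath_integral_le_of_lt hC hP hρ hρ₁ hx hy ?_
  have hpos : 0 < lam * dist x y := mul_pos (zero_lt_one.trans_le hlam) (dist_pos.2 hxy)
  push_cast
  rw [Real.coe_toNNReal']
  linarith

end ControlledPaths

/-! ### Quasiconvexity -/

section Quasiconvexity

variable {T : Type*} [MetricSpace T] {K : ℝ≥0}

lemma UPath.joinedIn (γ : UPath T) {W : Set T} (h : γ.InSet W) : JoinedIn W γ.start γ.finish := by
  refine ⟨γ.toPath, fun t => h _ ⟨?_, ?_⟩⟩ <;> nlinarith [γ.hab, t.2.1, t.2.2]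

lemma UPath.dist_start_finish_le (γ : UPath T) : dist γ.start γ.finish ≤ γ.b - γ.a := by
  have h := γ.lip.dist_le_mul γ.a ⟨le_rfl, γ.hab⟩ γ.b ⟨γ.hab, le_rfl⟩
  rwa [Real.dist_eq, abs_sub_comm, abs_of_nonneg (sub_nonneg.2 γ.hab), NNReal.coe_one,
    one_mul] at h

/-- The restriction of a path to the subinterval `[r, s]`. -/
def UPath.sub (γ : UPath T) {r s : ℝ} (hr : γ.a ≤ r) (hrs : r ≤ s) (hs : s ≤ γ.b) : UPath T where
  a := r
  b := s
  hab := hrs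
  toFun := γ.toFun
  lip := γ.lip.mono (Icc_subset_Icc hr hs)

/-- Quasiconvexity: any two points are joined by a path whose length is comparable to their
distance. The length is measured by the parameter interval of the `1`-Lipschitz path. -/
def IsQuasiconvex (T : Type*) [MetricSpace T] (K : ℝ≥0) : Prop :=
  ∀ x y : T, ∃ γ : UPath T, γ.start = x ∧ γ.finish = y ∧ γ.b - γ.a ≤ K * dist x y

lemma maximalFunction_one_le [MeasurableSpace T] (μ : Measure T) (x : T) :
    maximalFunction μ (fun _ => 1) x ≤ 1 :=
  iSup₂_le fun r _ => by
    rw [setLIntegral_one]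
    exact ENNReal.div_self_le_one

lemma SupportsPoincare.exists_isQuasiconvex [MeasurableSpace T] [BorelSpace T] [CompactSpace T]
    {μ : Measure T} [IsFiniteMeasure μ] {CP lP : ℝ} (hP : SupportsPoincare μ CP lP) {C : ℝ≥0}
    (hC : IsUniformlyDoubling μ C) : ∃ K, IsQuasiconvex T K := by
  obtain ⟨K, hK⟩ := exists_uPath_integral_le hC hP
  refine ⟨K, fun x y => ?_⟩
  obtain ⟨γ, hx, hy, hγ⟩ := hK (fun _ => 1) lowerSemicontinuous_const (fun _ => le_rfl) 1 x y
    (maximalFunction_one_le μ x) (maximalFunction_one_le μ y)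
  refine ⟨γ, hx, hy, ?_⟩
  rw [UPath.integral, setLIntegral_one, Real.volume_Icc, ENNReal.coe_one, mul_one, edist_dist,
    ← ENNReal.ofReal_coe_nnreal, ← ENNReal.ofReal_mul K.coe_nonneg] at hγ
  exact (ENNReal.ofReal_le_ofReal_iff (by positivity)).1 hγ

lemma IsQuasiconvex.pathConnectedSpace [Nonempty T] (hK : IsQuasiconvex T K) :
    PathConnectedSpace T where
  nonempty := inferInstance
  joined x y := by
    obtain ⟨γ, rfl, rfl, -⟩ := hK x y
    exact ⟨γ.toPath⟩

/-- The open ball of the length metric. -/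
def pathBall (x : T) (r : ℝ) : Set T :=
  {y | ∃ γ : UPath T, γ.start = x ∧ γ.finish = y ∧ γ.b - γ.a < r}

lemma pathBall_subset_ball (x : T) (r : ℝ) : pathBall x r ⊆ ball x r := by
  rintro _ ⟨γ, rfl, rfl, hγ⟩
  rw [mem_ball']
  exact γ.dist_start_finish_le.trans_lt hγ

lemma IsQuasiconvex.ball_subset_pathBall (hK : IsQuasiconvex T K) (x : T) (r : ℝ) :
    ball x (r / (K + 1)) ⊆ pathBall x r := by
  intro y hy
  obtain ⟨γ, hstart, hfinish, hγ⟩ := hK x y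
  rw [mem_ball', lt_div_iff₀ (by positivity)] at hy
  refine ⟨γ, hstart, hfinish, hγ.trans_lt ?_⟩
  linarith [dist_nonneg (x := x) (y := y)]

lemma isPathConnected_pathBall (x : T) {r : ℝ} (hr : 0 < r) : IsPathConnected (pathBall x r) := by
  refine ⟨x, ⟨UPath.const x, rfl, rfl, (sub_self (0 : ℝ)).trans_lt hr⟩, ?_⟩
  rintro _ ⟨γ, rfl, rfl, hγ⟩
  refine γ.joinedIn fun t ht => ⟨γ.sub le_rfl ht.1 ht.2, rfl, rfl, ?_⟩
  exact (sub_le_sub_right ht.2 _).trans_lt hγ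

lemma IsQuasiconvex.locallyPathConnectedSpace (hK : IsQuasiconvex T K) :
    LocallyPathConnectedSpace T := by
  refine LocallyPathConnectedSpace.of_bases (p := fun _ r => 0 < r) (s := pathBall)
    (fun x => ⟨fun t => ⟨fun ht => ?_, fun ⟨r, hr, hrt⟩ => ?_⟩⟩)
    fun x r => isPathConnected_pathBall x
  · obtain ⟨r, hr, hrt⟩ := Metric.mem_nhds_iff.1 ht
    exact ⟨r, hr, (pathBall_subset_ball x r).trans hrt⟩
  · exact mem_of_superset (ball_mem_nhds x (by positivity))
      ((hK.ball_subset_pathBall x r).trans hrt)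

end Quasiconvexity

lemma locallyPathConnectedSpace_of_isLocalHomeomorph {X Y : Type*} [TopologicalSpace X]
    [TopologicalSpace Y] [LocallyPathConnectedSpace Y] {f : X → Y} (hf : IsLocalHomeomorph f) :
    LocallyPathConnectedSpace X := by
  choose e he _ using hf
  let : ChartedSpace Y X :=
    { atlas := range e
      chartAt := e
      mem_chart_source := he
      chart_mem_atlas := fun x => ⟨x, rfl⟩ }
  exact ChartedSpace.locallyPathConnectedSpace Y X

/-! ### Maps of degree one and their lifts -/

section Lifts

lemma comp_liftPath {E X E' X' : Type*} [TopologicalSpace E] [TopologicalSpace X]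
    [TopologicalSpace E'] [TopologicalSpace X'] {q : E → X} {q' : E' → X'} (hq : IsCoveringMap q)
    (hq' : IsCoveringMap q') (h : C(E, E')) (g : C(X, X')) (hgh : ∀ e, q' (h e) = g (q e))
    (γ : C(I, X)) {e : E} {e' : E'} (hγ : γ 0 = q e) (hγ' : g (γ 0) = q' e') (he : h e = e') :
    h.comp (hq.liftPath γ e hγ) = hq'.liftPath (g.comp γ) e' hγ' := by
  rw [hq'.eq_liftPath_iff']
  refine ⟨funext fun t => ?_, by rw [ContinuousMap.comp_apply, hq.liftPath_zero, he]⟩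
  simp only [ContinuousMap.coe_comp, Function.comp_apply, hgh]
  exact congr_arg g (congr_fun (hq.liftPath_lifts γ e hγ) t)

variable {T Tt : Type*} [MetricSpace Tt] {π : Tt → T} {τ : Tt → Tt} {g : T → UnitAddCircle}
  {h : Tt → ℝ}

/-- `h : T̃ → ℝ` is a continuous lift of `g : T → ℝ/ℤ` which the deck transformation `τ` raises by
one. A map to the circle has such a lift exactly if it has degree one. -/
structure IsDegreeOneLift (π : Tt → T) (τ : Tt → Tt) (g : T → UnitAddCircle) (h : Tt → ℝ) :
    Prop where
  continuous : Continuous h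
  coe_eq (y : Tt) : (h y : UnitAddCircle) = g (π y)
  map_deck (y : Tt) : h (τ y) = h y + 1

lemma IsDegreeOneLift.exists_int_of_fiber (hh : IsDegreeOneLift π τ g h) {e e' : Tt}
    (he : π e = π e') :
    ∃ k : ℤ, h e' = h e + k := by
  have hcoe : (h e : UnitAddCircle) = h e' := by rw [hh.coe_eq, hh.coe_eq, he]
  obtain ⟨k, hk⟩ := QuotientAddGroup.eq.1 hcoe
  refine ⟨k, ?_⟩
  simp only [zsmul_eq_mul, mul_one] at hk
  linarith

variable [MetricSpace T] {x₀ : T} {α₀ : Path x₀ x₀}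

lemma isDegreeOneLoop_self {X : Type*} [TopologicalSpace X] {x : X} (α : Path x x) :
    IsDegreeOneLoop x α α := by
  refine ⟨Path.refl x, ?_⟩
  rw [← Path.Homotopic.Quotient.eq]
  simp

lemma IsDegreeOneLift.continuous_base (hh : IsDegreeOneLift π τ g h) (hcov : CoverSetup π) :
    Continuous g := by
  have hquot := hcov.1.isLocalHomeomorph.isOpenMap.isQuotientMap hcov.1.continuous hcov.2.1
  rw [hquot.continuous_iff]
  exact ((AddCircle.continuous_mk' 1).comp hh.continuous).congr hh.coe_eq

lemma IsDegreeOneLift.add_comp (hh : IsDegreeOneLift π τ g h) (hcov : CoverSetup π)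
    (hdeck : IsDeck π x₀ α₀ τ) {w : T → ℝ} (hw : Continuous w) :
    IsDegreeOneLift π τ (fun x => g x + (w x : UnitAddCircle)) (fun y => h y + w (π y)) where
  continuous := hh.continuous.add (hw.comp hcov.1.continuous)
  coe_eq y := by rw [AddCircle.coe_add, hh.coe_eq]
  map_deck y := by rw [hh.map_deck, hdeck.2.1]; ring

lemma IsDeck.apply_eq_liftPath_one (hdeck : IsDeck π x₀ α₀ τ) (hπ : IsCoveringMap π) {x : T}
    {γ : Path x x} (hγ : IsDegreeOneLoop x₀ α₀ γ) (e : Tt) (he : γ.toContinuousMap 0 = π e) :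
    τ e = hπ.liftPath γ.toContinuousMap e he 1 := by
  have hτ := hdeck.2.2 x γ hγ (hπ.liftPath γ.toContinuousMap e he)
    fun t => congr_fun (hπ.liftPath_lifts γ.toContinuousMap e he) t
  rwa [hπ.liftPath_zero] at hτ

lemma homotopic_stdLoop_one_of_lift {a : UnitAddCircle} (γ : Path a a) (k : C(I, ℝ))
    (hk : ∀ t, (k t : UnitAddCircle) = γ t) (hk₁ : k 1 = k 0 + 1) :
    Path.Homotopic γ (stdLoop 1 a) := by
  let P : Path (k 0) (k 0 + 1) := ⟨k, rfl, hk₁⟩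
  let Q : Path (k 0) (k 0 + 1) := ⟨⟨fun t => k 0 + (t : ℝ), by fun_prop⟩, by simp, by simp⟩
  have hPQ := (SimplyConnectedSpace.paths_homotopic P Q).map
    ⟨((↑) : ℝ → UnitAddCircle), AddCircle.continuous_mk' 1⟩
  have hP : γ.toContinuousMap = (P.map (AddCircle.continuous_mk' 1)).toContinuousMap :=
    ContinuousMap.ext fun t => (hk t).symm
  have hQ : (stdLoop 1 a).toContinuousMap =
      (Q.map (AddCircle.continuous_mk' 1)).toContinuousMap := by
    have hk₀ : (k 0 : UnitAddCircle) = a := (hk 0).trans γ.source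
    refine ContinuousMap.ext fun t => ?_
    change a + ((((1 : ℤ) : ℝ) * (t : ℝ) : ℝ) : UnitAddCircle) =
      ((k 0 + (t : ℝ) : ℝ) : UnitAddCircle)
    rw [Int.cast_one, one_mul, AddCircle.coe_add, hk₀]
  change Nonempty (ContinuousMap.HomotopyRel _ _ _)
  rw [hP, hQ]
  exact hPQ

lemma IsDegreeOneLift.hasDegree_one (hh : IsDegreeOneLift π τ g h) (hcov : CoverSetup π)
    (hdeck : IsDeck π x₀ α₀ τ) : HasDegree x₀ α₀ g 1 := by
  refine ⟨hh.continuous_base hcov, fun x γ hγ => ?_⟩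
  obtain ⟨e, rfl⟩ := hcov.2.1 x
  have he : γ.toContinuousMap 0 = π e := γ.source
  refine homotopic_stdLoop_one_of_lift _
    ((⟨h, hh.continuous⟩ : C(Tt, ℝ)).comp (hcov.1.liftPath γ.toContinuousMap e he)) (fun t => ?_) ?_
  · exact (hh.coe_eq _).trans (congr_arg g (congr_fun (hcov.1.liftPath_lifts _ e he) t))
  · change h (hcov.1.liftPath _ e he 1) = h (hcov.1.liftPath _ e he 0) + 1
    rw [← hdeck.apply_eq_liftPath_one hcov.1 hγ, hcov.1.liftPath_zero, hh.map_deck]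

lemma exists_isDegreeOneLift [PathConnectedSpace T] [LocallyPathConnectedSpace T]
    (hcov : CoverSetup π) (hdeck : IsDeck π x₀ α₀ τ) (hg : HasDegree x₀ α₀ g 1) :
    ∃ h : Tt → ℝ, IsDegreeOneLift π τ g h := by
  obtain ⟨hπ, hsurj, -, hsc⟩ := hcov
  obtain ⟨hgc, hdeg⟩ := hg
  have := locallyPathConnectedSpace_of_isLocalHomeomorph hπ.isLocalHomeomorph
  have hcoe := AddCircle.isCoveringMap_coe (1 : ℝ)
  obtain ⟨y₀, -⟩ := hsurj x₀
  obtain ⟨c₀, hc₀⟩ := QuotientAddGroup.mk_surjective (g (π y₀))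
  obtain ⟨F, ⟨-, hF⟩, -⟩ := hcoe.existsUnique_continuousMap_lifts
    (⟨g ∘ π, hgc.comp hπ.continuous⟩ : C(Tt, UnitAddCircle)) y₀ c₀ hc₀
  replace hF : ∀ y, (F y : UnitAddCircle) = g (π y) := congr_fun hF
  refine ⟨F, F.continuous, hF, fun y => ?_⟩
  let η : Path (π y) x₀ := PathConnectedSpace.somePath _ _
  let α := η.trans (α₀.trans η.symm)
  have hα : IsDegreeOneLoop x₀ α₀ α := ⟨η, Path.Homotopic.refl _⟩
  have hgα : (α.map hgc).toContinuousMap 0 = (F y : UnitAddCircle) := by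
    rw [hF]; exact (α.map hgc).source
  have hstd : (stdLoop 1 (g (π y))).toContinuousMap 0 = (F y : UnitAddCircle) := by
    rw [hF]; exact (stdLoop 1 _).source
  have hFα : F.comp (hπ.liftPath α.toContinuousMap y α.source) =
      hcoe.liftPath (α.map hgc).toContinuousMap (F y) hgα :=
    comp_liftPath hπ hcoe F ⟨g, hgc⟩ hF _ _ hgα rfl
  have hlift_std : (⟨fun t => F y + (t : ℝ), by fun_prop⟩ : C(I, ℝ)) =
      hcoe.liftPath (stdLoop 1 (g (π y))).toContinuousMap (F y) hstd := by
    rw [hcoe.eq_liftPath_iff']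
    refine ⟨funext fun t => ?_, by simp⟩
    simp [stdLoop, ← hF]
  have hends := hcoe.liftPath_apply_one_eq_of_homotopicRel (hdeg _ α hα) (F y) hgα hstd
  rw [← hFα, ← hlift_std] at hends
  rw [hdeck.apply_eq_liftPath_one hπ hα y α.source]
  simpa using hends

end Lifts

/-! ### Fibers of the universal cover -/

section Fibers

variable {T Tt : Type*} [MetricSpace T] [MetricSpace Tt] {x₀ : T} {α₀ : Path x₀ x₀} {π : Tt → T}
  {τ : Tt → Tt}

lemma IsGenerator.exists_zpow_monodromyPerm_eq (hgen : IsGenerator x₀ α₀) (hcov : CoverSetup π)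
    (e e' : π ⁻¹' {x₀}) :
    ∃ k : ℤ, ((hcov.1.monodromyPerm x₀ (FundamentalGroup.fromPath ⟦α₀⟧)) ^ k) e = e' := by
  have hsc := hcov.2.2.2
  let q : Path.Homotopic.Quotient (e : Tt) e' := ⟦PathConnectedSpace.somePath _ _⟧
  let πq := q.map ⟨π, hcov.1.continuous⟩
  let γ : Path.Homotopic.Quotient x₀ x₀ := πq.cast e.2.symm e'.2.symm
  obtain ⟨k, hk⟩ := hgen.2 γ
  have hγ : hcov.1.monodromy γ e = e' := hcov.1.monodromy_eq_of_map_eq q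
    (πq.cast_rfl_rfl.symm.trans (πq.cast_cast _ _ _ _).symm)
  refine ⟨k, ?_⟩
  rw [← map_zpow, ← hγ]
  exact congr_arg (fun δ => hcov.1.monodromy δ e) hk

lemma IsDeck.monodromyPerm_generator (hdeck : IsDeck π x₀ α₀ τ) (hπ : IsCoveringMap π)
    (e : π ⁻¹' {x₀}) :
    (hπ.monodromyPerm x₀ (FundamentalGroup.fromPath ⟦α₀⟧) e : Tt) = τ e :=
  (hdeck.apply_eq_liftPath_one hπ (isDegreeOneLoop_self α₀) e (α₀.source.trans e.2.symm)).symm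

namespace IsDegreeOneLift

variable {h : Tt → ℝ} {g : T → UnitAddCircle}

lemma zpow_monodromyPerm (hh : IsDegreeOneLift π τ g h) (hπ : IsCoveringMap π)
    (hdeck : IsDeck π x₀ α₀ τ) (k : ℤ) (e : π ⁻¹' {x₀}) :
    h (((hπ.monodromyPerm x₀ (FundamentalGroup.fromPath ⟦α₀⟧)) ^ k) e : Tt) = h e + k := by
  set θ := hπ.monodromyPerm x₀ (FundamentalGroup.fromPath ⟦α₀⟧) with hθ
  have hθ₁ (e : π ⁻¹' {x₀}) : h (θ e : Tt) = h e + 1 := by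
    rw [hθ, hdeck.monodromyPerm_generator hπ, hh.map_deck]
  induction k generalizing e with
  | zero => simp
  | succ n ih =>
    rw [zpow_add_one, Equiv.Perm.mul_apply, ih, hθ₁]
    push_cast; ring
  | pred n ih =>
    have hθ_inv := hθ₁ (θ⁻¹ e)
    rw [show θ (θ⁻¹ e) = e from θ.apply_symm_apply e] at hθ_inv
    rw [zpow_sub_one, Equiv.Perm.mul_apply, ih, hθ_inv]
    push_cast; ring

lemma eq_of_eq_of_mem_fiber (hh : IsDegreeOneLift π τ g h) (hcov : CoverSetup π)
    (hgen : IsGenerator x₀ α₀) (hdeck : IsDeck π x₀ α₀ τ) {e e' : π ⁻¹' {x₀}} (he : h e = h e') :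
    e = e' := by
  obtain ⟨k, rfl⟩ := hgen.exists_zpow_monodromyPerm_eq hcov e e'
  rw [hh.zpow_monodromyPerm hcov.1 hdeck, left_eq_add, Int.cast_eq_zero] at he
  rw [he, zpow_zero, Equiv.Perm.one_apply]

/-- Monodromy along a path to the base point is a bijection of fibers, and it is compatible with
the lifts of `g`. -/
lemma eq_of_eq [PathConnectedSpace T] (hh : IsDegreeOneLift π τ g h) (hcov : CoverSetup π)
    (hgen : IsGenerator x₀ α₀) (hdeck : IsDeck π x₀ α₀ τ) {e e' : Tt} (he : π e = π e')
    (hee' : h e = h e') : e = e' := by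
  have hg := hh.continuous_base hcov
  let η : Path (π e) x₀ := PathConnectedSpace.somePath _ _
  have hgη : g (η.toContinuousMap 0) = (h e : UnitAddCircle) := by
    rw [hh.coe_eq]; exact congr_arg g η.source
  have hlift (d : Tt) (hd : η.toContinuousMap 0 = π d) (hde : h d = h e) :
      h (hcov.1.liftPath η.toContinuousMap d hd 1) =
        (AddCircle.isCoveringMap_coe (1 : ℝ)).liftPath (.comp ⟨g, hg⟩ η.toContinuousMap) (h e)
          hgη 1 :=
    DFunLike.congr_fun (comp_liftPath hcov.1 (AddCircle.isCoveringMap_coe (1 : ℝ))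
      ⟨h, hh.continuous⟩ ⟨g, hg⟩ hh.coe_eq _ hd hgη hde) 1
  have hmonodromy : hcov.1.monodromy ⟦η⟧ ⟨e, rfl⟩ = hcov.1.monodromy ⟦η⟧ ⟨e', he.symm⟩ :=
    hh.eq_of_eq_of_mem_fiber hcov hgen hdeck
      ((hlift e η.source rfl).trans (hlift e' (η.source.trans he) hee'.symm).symm)
  exact congr_arg Subtype.val ((hcov.1.monodromy_bijective _).1 hmonodromy)

lemma encard_fiber_le [PathConnectedSpace T] (hh : IsDegreeOneLift π τ g h) (hcov : CoverSetup π)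
    (hgen : IsGenerator x₀ α₀) (hdeck : IsDeck π x₀ α₀ τ) {U : Set Tt} {n : ℕ}
    (hU : ∀ y ∈ U, |h y| ≤ n) (x : T) : (π ⁻¹' {x} ∩ U).encard ≤ (4 * n + 1 : ℕ) := by
  rcases (π ⁻¹' {x} ∩ U).eq_empty_or_nonempty with hempty | ⟨e, rfl, heU⟩
  · simp [hempty]
  choose! k hk using fun e' (he' : π e = π e') => hh.exists_int_of_fiber he'
  have hmaps : MapsTo k (π ⁻¹' {π e} ∩ U) (Icc (-(2 * n : ℤ)) (2 * n)) := by
    rintro e' ⟨he', he'U⟩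
    have hke' := hk e' he'.symm
    obtain ⟨hlow, hup⟩ := abs_le.1 (hU e heU)
    obtain ⟨hlow', hup'⟩ := abs_le.1 (hU e' he'U)
    constructor <;> rify <;> linarith
  have hinj : InjOn k (π ⁻¹' {π e} ∩ U) := by
    rintro y ⟨hy, -⟩ z ⟨hz, -⟩ hyz
    refine hh.eq_of_eq hcov hgen hdeck (hy.trans hz.symm) ?_
    rw [hk y hy.symm, hk z hz.symm, hyz]
  refine (encard_le_encard_of_injOn hmaps hinj).trans ?_
  rw [← Finset.coe_Icc, encard_coe_eq_coe_finsetCard, Int.card_Icc]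
  norm_cast
  lia

lemma countable_fiber [PathConnectedSpace T] (hh : IsDegreeOneLift π τ g h) (hcov : CoverSetup π)
    (hgen : IsGenerator x₀ α₀) (hdeck : IsDeck π x₀ α₀ τ) (x : T) : (π ⁻¹' {x}).Countable := by
  have hinj : InjOn h (π ⁻¹' {x}) := fun e he e' he' =>
    hh.eq_of_eq hcov hgen hdeck (he.trans he'.symm)
  rcases (π ⁻¹' {x}).eq_empty_or_nonempty with hempty | ⟨e, he⟩
  · exact hempty ▸ countable_empty
  refine MapsTo.countable_of_injOn (t := range fun k : ℤ => h e + k) (fun e' he' => ?_) hinj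
    (countable_range _)
  obtain ⟨k, hk⟩ := hh.exists_int_of_fiber (he.trans (Eq.symm he'))
  exact ⟨k, hk.symm⟩

end IsDegreeOneLift

end Fibers

/-! ### Local isometries and lifts of paths -/

section LocalIsometry

variable {X Y : Type*} [MetricSpace X] [MetricSpace Y] {φ : X → Y}

namespace IsLocalIsometry

lemma exists_nhdsWithin_edist_eq (hφ : IsLocalIsometry φ) {S : Type*} [TopologicalSpace S]
    {F : S → X} {s : Set S} (hF : ContinuousOn F s) {t : S} (ht : t ∈ s) :
    ∃ U ∈ 𝓝[s] t, U ⊆ s ∧ ∀ r ∈ U, ∀ r' ∈ U, edist (φ (F r)) (φ (F r')) = edist (F r) (F r') := by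
  obtain ⟨ε, hε, hiso⟩ := hφ (F t)
  refine ⟨s ∩ F ⁻¹' ball (F t) ε,
    inter_mem self_mem_nhdsWithin (hF t ht (ball_mem_nhds _ hε)), inter_subset_left, ?_⟩
  rintro r ⟨-, hr⟩ r' ⟨-, hr'⟩
  rw [edist_dist, edist_dist, hiso _ hr _ hr']

variable {F : ℝ → X} {a b : ℝ}

lemma lipschitzOnWith_comp_iff (hφ : IsLocalIsometry φ) (hF : ContinuousOn F (Icc a b))
    {K : ℝ≥0} : LipschitzOnWith K (φ ∘ F) (Icc a b) ↔ LipschitzOnWith K F (Icc a b) := by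
  constructor <;> intro hK <;> refine lipschitzOnWith_Icc_of_forall_nhdsWithin fun t ht => ?_ <;>
    obtain ⟨U, hU, hUI, hiso⟩ := hφ.exists_nhdsWithin_edist_eq hF ht <;>
    refine ⟨U, hU, fun r hr s hs => ?_⟩
  · rw [← hiso r hr s hs]
    exact hK (hUI hr) (hUI hs)
  · exact (hiso r hr s hs).trans_le (hK (hUI hr) (hUI hs))

lemma edist_le_lintegral (hφ : IsLocalIsometry φ) (hab : a ≤ b) (hF : ContinuousOn F (Icc a b))
    {ρ : ℝ → ℝ≥0∞} (hφF : IsUpperGradientAlong (φ ∘ F) ρ a b) :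
    edist (F a) (F b) ≤ ∫⁻ t in Icc a b, ρ t := by
  refine edist_le_lintegral_of_forall_nhdsWithin_Icc hab fun t ht => ?_
  obtain ⟨U, hU, hUI, hiso⟩ := hφ.exists_nhdsWithin_edist_eq hF ht
  refine ⟨U, hU, fun r hr s hs hrs => ?_⟩
  rw [← hiso r hr s hs]
  exact hφF (hUI hr).1 hrs (hUI hs).2

end IsLocalIsometry

lemma IsUpperGradient.along {E : Type*} [PseudoEMetricSpace E] {u : X → E} {ρ : X → ℝ≥0∞}
    (hu : IsUpperGradient u ρ) (γ : UPath X) :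
    IsUpperGradientAlong (u ∘ γ.toFun) (ρ ∘ γ.toFun) γ.a γ.b :=
  fun _ _ hs hst ht => hu (γ.sub hs hst ht)

/-- The image of a path under a local isometry, with the same parametrization. -/
def UPath.map (hφ : IsLocalIsometry φ) (γ : UPath X) : UPath Y where
  a := γ.a
  b := γ.b
  hab := γ.hab
  toFun := φ ∘ γ.toFun
  lip := (hφ.lipschitzOnWith_comp_iff γ.lip.continuousOn).2 γ.lip

lemma CoverSetup.exists_lift_uPath {π : X → Y} (hcov : CoverSetup π) (γ : UPath Y) {t₀ : ℝ}
    (ht₀ : t₀ ∈ Icc γ.a γ.b) {e : X} (he : π e = γ.toFun t₀) :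
    ∃ γt : ℝ → X, LipschitzOnWith 1 γt (Icc γ.a γ.b) ∧ γt t₀ = e ∧
      EqOn (π ∘ γt) γ.toFun (Icc γ.a γ.b) := by
  have hcont : Continuous fun t : ℝ => γ.toFun (projIcc γ.a γ.b γ.hab t) :=
    γ.lip.continuousOn.comp_continuous (by fun_prop) fun t => (projIcc γ.a γ.b γ.hab t).2
  obtain ⟨F, ⟨hF₀, hF⟩, -⟩ := hcov.1.existsUnique_continuousMap_lifts (⟨_, hcont⟩ : C(ℝ, Y)) t₀ e
    (by simpa only [ContinuousMap.coe_mk, projIcc_of_mem γ.hab ht₀] using he)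
  have hπF : EqOn (π ∘ F) γ.toFun (Icc γ.a γ.b) := fun t ht => by
    simpa only [ContinuousMap.coe_mk, projIcc_of_mem γ.hab ht] using congr_fun hF t
  exact ⟨F, (hcov.2.2.1.lipschitzOnWith_comp_iff F.continuous.continuousOn).1
    (fun s hs t ht => by rw [hπF hs, hπF ht]; exact γ.lip hs ht), hF₀, hπF⟩

lemma isLocalIsometry_coe_unitAddCircle : IsLocalIsometry ((↑) : ℝ → UnitAddCircle) := by
  refine fun x => ⟨1 / 4, by norm_num, fun y hy z hz => ?_⟩
  have hyz : |y - z| ≤ 1 / 2 := by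
    rw [← Real.dist_eq]
    linarith [dist_triangle_right y z x, mem_ball.1 hy, mem_ball.1 hz]
  rw [dist_eq_norm, Real.dist_eq, ← AddCircle.coe_sub,
    (AddCircle.norm_coe_eq_abs_iff (1 : ℝ) one_ne_zero).2 (by simpa using hyz)]

lemma edist_coe_unitAddCircle_le (x y : ℝ) : edist (x : UnitAddCircle) y ≤ edist x y := by
  rw [edist_dist, edist_dist, dist_eq_norm, dist_eq_norm, ← AddCircle.coe_sub]
  exact ENNReal.ofReal_le_ofReal QuotientAddGroup.norm_mk_le_norm

end LocalIsometry

/-! ### The lifted measure -/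

section LiftedMeasure

lemma lintegral_iSup_rpow_le {X : Type*} [MeasurableSpace X] (μ : Measure X) {g : ℕ → X → ℝ≥0∞}
    (hg : ∀ n, Measurable (g n)) {p : ℝ} (hp : 0 < p) :
    ∫⁻ x, (⨆ n, g n x) ^ p ∂μ ≤ ∑' n, ∫⁻ x, g n x ^ p ∂μ := by
  rw [← lintegral_tsum fun n => ((hg n).pow_const p).aemeasurable]
  refine lintegral_mono fun x => ?_
  rw [← ENNReal.orderIsoRpow_apply p hp, OrderIso.map_iSup]
  exact iSup_le fun n => ENNReal.le_tsum n

lemma measurableEmbedding_inclusion {E : Type*} [MeasurableSpace E] {A B : Set E} (hAB : A ⊆ B)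
    (hA : MeasurableSet A) : MeasurableEmbedding (inclusion hAB) := by
  refine ⟨inclusion_injective hAB, measurable_inclusion hAB, fun s hs => ?_⟩
  have himage : inclusion hAB '' s = Subtype.val ⁻¹' (Subtype.val '' s) := by
    ext y
    simp [Subtype.ext_iff]
  rw [himage]
  exact measurable_subtype_coe (hA.subtype_image hs)

lemma exists_measurableEmbedding_partition {E X : Type*} [TopologicalSpace E]
    [SecondCountableTopology E] [MeasurableSpace E] [BorelSpace E] [TopologicalSpace X]
    [MeasurableSpace X] [BorelSpace X] {π : E → X} (hπ : IsLocalHomeomorph π) :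
    ∃ A : ℕ → Set E, (∀ i, MeasurableSet (A i)) ∧ Pairwise (Function.onFun Disjoint A) ∧
      ⋃ i, A i = univ ∧ ∀ i, MeasurableEmbedding fun y : A i => π y := by
  choose e he hπe using hπ
  obtain ⟨S, hS, hcover⟩ := TopologicalSpace.countable_cover_nhds
    fun y => (e y).open_source.mem_nhds (he y)
  rcases S.eq_empty_or_nonempty with rfl | hne
  · have hE : IsEmpty E := by
      simpa only [biUnion_empty, eq_comm (a := ∅), univ_eq_empty_iff] using hcover
    refine ⟨fun _ => ∅, fun _ => .empty, fun _ _ _ => disjoint_bot_left, Subsingleton.elim _ _,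
      fun _ => ⟨Function.injective_of_subsingleton _, measurable_of_empty _, fun s _ => ?_⟩⟩
    rw [s.eq_empty_of_isEmpty, image_empty]
    exact .empty
  obtain ⟨c, rfl⟩ := hS.exists_eq_range hne
  rw [biUnion_range] at hcover
  have hA (i : ℕ) : MeasurableSet (disjointed (fun i => (e (c i)).source) i) :=
    .disjointed (fun i => (e (c i)).open_source.measurableSet) i
  refine ⟨_, hA, disjoint_disjointed _, iUnion_disjointed.trans hcover, fun i => ?_⟩
  have hsub := disjointed_subset (fun i => (e (c i)).source) i
  have hemb := (e (c i)).isOpenEmbedding_restrict.measurableEmbedding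
  rw [← hπe] at hemb
  exact hemb.comp (measurableEmbedding_inclusion hsub (hA i))

lemma separableSpace_of_countable_fiber {E X : Type*} [TopologicalSpace E] [TopologicalSpace X]
    [TopologicalSpace.SeparableSpace X] {π : E → X} (hπ : IsOpenMap π)
    (hfib : ∀ x, (π ⁻¹' {x}).Countable) : TopologicalSpace.SeparableSpace E := by
  obtain ⟨D, hDc, hD⟩ := TopologicalSpace.exists_countable_dense X
  refine ⟨π ⁻¹' D, ?_, hD.preimage hπ⟩
  rw [← biUnion_preimage_singleton]
  exact hDc.biUnion fun x _ => hfib x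

namespace IsLiftedMeasure

variable {T Tt : Type*} [MetricSpace T] [MeasurableSpace T] [MetricSpace Tt] [MeasurableSpace Tt]
  {π : Tt → T} {μ : Measure T} {μt : Measure Tt}

lemma map_restrict_apply (hμt : IsLiftedMeasure π μ μt) (hπ : Measurable π) {U : Set Tt}
    (hU : MeasurableSet U) {B : Set T} (hB : MeasurableSet B) :
    Measure.map π (μt.restrict U) B = ∫⁻ x in B, ((π ⁻¹' {x} ∩ U).encard : ℝ≥0∞) ∂μ := by
  rw [Measure.map_apply hπ hB, Measure.restrict_apply (hπ hB), hμt _ ((hπ hB).inter hU),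
    ← lintegral_indicator hB]
  refine lintegral_congr fun x => ?_
  by_cases hx : x ∈ B
  · have hfib : π ⁻¹' {x} ∩ π ⁻¹' B = π ⁻¹' {x} := by
      rw [← preimage_inter, inter_eq_left.2 (singleton_subset_iff.2 hx)]
    rw [indicator_of_mem hx, ← inter_assoc, hfib]
  · rw [indicator_of_notMem hx, ← inter_assoc, ← preimage_inter, singleton_inter_eq_empty.2 hx]
    simp

lemma setLIntegral_comp_le (hμt : IsLiftedMeasure π μ μt) (hπ : Measurable π) {U : Set Tt}
    (hU : MeasurableSet U) {N : ℕ} (hN : ∀ x, (π ⁻¹' {x} ∩ U).encard ≤ N) {k : T → ℝ≥0∞}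
    (hk : Measurable k) : ∫⁻ y in U, k (π y) ∂μt ≤ N * ∫⁻ x, k x ∂μ := by
  have hmap : Measure.map π (μt.restrict U) ≤ (N : ℝ≥0∞) • μ := by
    refine Measure.le_iff.2 fun B hB => ?_
    rw [hμt.map_restrict_apply hπ hU hB, Measure.smul_apply, smul_eq_mul, ← setLIntegral_const]
    exact lintegral_mono fun x =>
      (ENat.toENNReal_le.2 (hN x)).trans_eq (ENat.toENNReal_coe N)
  rw [← lintegral_map hk hπ, ← smul_eq_mul, ← lintegral_smul_measure]
  exact lintegral_mono' hmap fun _ => le_rfl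

lemma map_restrict_of_injOn (hμt : IsLiftedMeasure π μ μt) (hπ : Measurable π) {A : Set Tt}
    (hA : MeasurableSet A) (hinj : InjOn π A) (hπA : MeasurableSet (π '' A)) :
    Measure.map π (μt.restrict A) = μ.restrict (π '' A) := by
  refine Measure.ext fun B hB => ?_
  have hcard (x : T) :
      ((π ⁻¹' {x} ∩ A).encard : ℝ≥0∞) = (π '' A).indicator (1 : T → ℝ≥0∞) x := by
    by_cases hx : x ∈ π '' A
    · obtain ⟨y, hy, rfl⟩ := hx
      have hfib : π ⁻¹' {π y} ∩ A = {y} :=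
        Subset.antisymm (fun z hz => hinj hz.2 hy hz.1) (singleton_subset_iff.2 ⟨rfl, hy⟩)
      rw [hfib, indicator_of_mem (mem_image_of_mem π hy)]
      simp
    · have hfib : π ⁻¹' {x} ∩ A = ∅ :=
        eq_empty_of_forall_notMem fun y hy => hx ⟨y, hy.2, hy.1⟩
      rw [hfib, indicator_of_notMem hx]
      simp
  simp_rw [hμt.map_restrict_apply hπ hA hB, hcard]
  rw [lintegral_indicator_one hπA, Measure.restrict_apply hπA, Measure.restrict_apply hB,
    inter_comm]

variable [BorelSpace T] [BorelSpace Tt]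

/-- The function on the base is the supremum, over a countable family of sheets, of the
transported restrictions of `g`. -/
lemma exists_le_comp_lintegral_rpow_le [SecondCountableTopology Tt]
    (hμt : IsLiftedMeasure π μ μt) (hπ : IsLocalHomeomorph π) {g : Tt → ℝ≥0∞}
    (hg : Measurable g) {p : ℝ} (hp : 0 < p) :
    ∃ G : T → ℝ≥0∞, Measurable G ∧ (∀ y, g y ≤ G (π y)) ∧
      ∫⁻ x, G x ^ p ∂μ ≤ ∫⁻ y, g y ^ p ∂μt := by
  obtain ⟨A, hA, hdisj, hcover, hemb⟩ := exists_measurableEmbedding_partition hπ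
  have hπm : Measurable π := hπ.continuous.measurable
  let G (i : ℕ) : T → ℝ≥0∞ := Function.extend (fun y : A i => π y) (fun y => g y) 0
  have hGm (i : ℕ) : Measurable (G i) :=
    (hemb i).measurable_extend (hg.comp measurable_subtype_coe) measurable_zero
  have hGπ (i : ℕ) {y : Tt} (hy : y ∈ A i) : G i (π y) = g y :=
    (hemb i).injective.extend_apply _ _ ⟨y, hy⟩
  have hG_zero (i : ℕ) {x : T} (hx : x ∉ π '' A i) : G i x = 0 :=
    Function.extend_apply' _ _ _ fun ⟨y, hy⟩ => hx ⟨y, y.2, hy⟩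
  have hπA (i : ℕ) : MeasurableSet (π '' A i) := by
    simpa only [← image_eq_range] using (hemb i).measurableSet_range
  have hinj (i : ℕ) : InjOn π (A i) := injOn_iff_injective.2 (hemb i).injective
  have hsheet (i : ℕ) : ∫⁻ x, G i x ^ p ∂μ = ∫⁻ y in A i, g y ^ p ∂μt := by
    rw [← setLIntegral_eq_of_support_subset (s := π '' A i),
      ← hμt.map_restrict_of_injOn hπm (hA i) (hinj i) (hπA i),
      lintegral_map ((hGm i).pow_const p) hπm]
    · exact setLIntegral_congr_fun (hA i) fun y hy => by rw [hGπ i hy]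
    · refine fun x hx => by_contra fun hxA => hx ?_
      change G i x ^ p = 0
      rw [hG_zero i hxA, ENNReal.zero_rpow_of_pos hp]
  refine ⟨fun x => ⨆ i, G i x, .iSup hGm, fun y => ?_, ?_⟩
  · obtain ⟨i, hi⟩ := iUnion_eq_univ_iff.1 hcover y
    exact (hGπ i hi).symm.trans_le (le_iSup (fun i => G i (π y)) i)
  · calc ∫⁻ x, (⨆ i, G i x) ^ p ∂μ ≤ ∑' i, ∫⁻ x, G i x ^ p ∂μ := lintegral_iSup_rpow_le μ hGm hp
      _ = ∑' i, ∫⁻ y in A i, g y ^ p ∂μt := by simp_rw [hsheet]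
      _ = ∫⁻ y, g y ^ p ∂μt := by rw [← lintegral_iUnion hA hdisj, hcover, setLIntegral_univ]

end IsLiftedMeasure

end LiftedMeasure

/-! ### Path families of zero modulus -/

section Modulus

variable {X : Type*} [PseudoMetricSpace X]

lemma UPath.integral_const_mul (γ : UPath X) {c : ℝ≥0∞} (hc : c ≠ ⊤) (g : X → ℝ≥0∞) :
    γ.integral (fun x => c * g x) = c * γ.integral g :=
  lintegral_const_mul' _ _ hc

variable [MeasurableSpace X] {μ ν : Measure X} {p : ℝ} {Γ Γ' : Set (UPath X)}

lemma pathMod_mono (hμ : ν ≤ μ) (hΓ : Γ' ⊆ Γ) : pathMod ν p Γ' ≤ pathMod μ p Γ :=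
  le_iInf₂ fun ρ hρ => (iInf₂_le ρ ⟨hρ.1, fun γ hγ => hρ.2 γ (hΓ hγ)⟩).trans
    (lintegral_mono' hμ fun _ => le_rfl)

lemma exists_lintegral_rpow_lt_of_pathMod_eq_zero (h : pathMod μ p Γ = 0) {ε : ℝ≥0∞}
    (hε : 0 < ε) : ∃ g : X → ℝ≥0∞, Measurable g ∧ (∀ γ ∈ Γ, 1 ≤ γ.integral g) ∧
      ∫⁻ x, g x ^ p ∂μ < ε := by
  rw [← h] at hε
  simp only [pathMod, iInf_lt_iff] at hε
  obtain ⟨g, ⟨hgm, hgΓ⟩, hg⟩ := hε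
  exact ⟨g, hgm, hgΓ, hg⟩

lemma pathMod_iUnion_eq_zero {Γ : ℕ → Set (UPath X)} (hp : 0 < p)
    (h : ∀ n, pathMod μ p (Γ n) = 0) : pathMod μ p (⋃ n, Γ n) = 0 := by
  refine le_antisymm (ENNReal.le_of_forall_pos_le_add fun ε hε _ => ?_) zero_le
  obtain ⟨δ, hδ, hδε⟩ := ENNReal.exists_pos_sum_of_countable (ENNReal.coe_pos.2 hε).ne' ℕ
  choose g hgm hgΓ hg using fun n => exists_lintegral_rpow_lt_of_pathMod_eq_zero (h n)
    (ENNReal.coe_pos.2 (hδ n))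
  have hadm : ∀ γ ∈ ⋃ n, Γ n, 1 ≤ γ.integral fun x => ⨆ n, g n x := fun γ hγ => by
    obtain ⟨n, hn⟩ := mem_iUnion.1 hγ
    exact (hgΓ n γ hn).trans (lintegral_mono fun t => le_iSup (fun n => g n (γ.toFun t)) n)
  calc pathMod μ p (⋃ n, Γ n) ≤ ∫⁻ x, (⨆ n, g n x) ^ p ∂μ := iInf₂_le _ ⟨.iSup hgm, hadm⟩
    _ ≤ ∑' n, ∫⁻ x, g n x ^ p ∂μ := lintegral_iSup_rpow_le μ hgm hp
    _ ≤ ∑' n, (δ n : ℝ≥0∞) := ENNReal.tsum_le_tsum fun n => (hg n).le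
    _ ≤ 0 + ε := by rw [zero_add]; exact hδε.le

lemma exists_integral_eq_top_of_pathMod_eq_zero (hp : 0 < p) (h : pathMod μ p Γ = 0) {ε : ℝ≥0}
    (hε : 0 < ε) : ∃ g : X → ℝ≥0∞, Measurable g ∧ (∀ γ ∈ Γ, γ.integral g = ⊤) ∧
      ∫⁻ x, g x ^ p ∂μ ≤ ε := by
  obtain ⟨δ, hδ, hδε⟩ := ENNReal.exists_pos_sum_of_countable (ENNReal.coe_pos.2 hε).ne' ℕ
  have htop (n : ℕ) : (n : ℝ≥0∞) + 1 ≠ ⊤ := by finiteness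
  have hpos (n : ℕ) : 0 < (δ n : ℝ≥0∞) / ((n : ℝ≥0∞) + 1) ^ p :=
    ENNReal.div_pos (ENNReal.coe_pos.2 (hδ n)).ne' (ENNReal.rpow_ne_top_of_nonneg hp.le (htop n))
  choose g hgm hgΓ hg using fun n : ℕ => exists_lintegral_rpow_lt_of_pathMod_eq_zero h (hpos n)
  have hgm' (n : ℕ) : Measurable fun x => ((n : ℝ≥0∞) + 1) * g n x := (hgm n).const_mul _
  refine ⟨fun x => ⨆ n : ℕ, ((n : ℝ≥0∞) + 1) * g n x, .iSup hgm', fun γ hγ => ?_, ?_⟩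
  · refine ENNReal.eq_top_of_forall_nnreal_le fun r => ?_
    obtain ⟨n, hn⟩ := exists_nat_ge r
    calc (r : ℝ≥0∞) ≤ ((n : ℝ≥0∞) + 1) * 1 := by
          rw [mul_one]; exact le_add_right (by exact_mod_cast hn)
      _ ≤ ((n : ℝ≥0∞) + 1) * γ.integral (g n) := by gcongr; exact hgΓ n γ hγ
      _ = γ.integral fun x => ((n : ℝ≥0∞) + 1) * g n x := (γ.integral_const_mul (htop n) _).symm
      _ ≤ _ := lintegral_mono fun t =>
          le_iSup (fun n : ℕ => ((n : ℝ≥0∞) + 1) * g n (γ.toFun t)) n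
  · have hterm (n : ℕ) : ∫⁻ x, (((n : ℝ≥0∞) + 1) * g n x) ^ p ∂μ ≤ δ n := by
      simp_rw [ENNReal.mul_rpow_of_nonneg _ _ hp.le]
      rw [lintegral_const_mul _ ((hgm n).pow_const p)]
      exact (mul_le_mul_right (hg n).le _).trans ENNReal.mul_div_le
    exact (lintegral_iSup_rpow_le μ hgm' hp).trans ((ENNReal.tsum_le_tsum hterm).trans hδε.le)

lemma pathMod_eq_zero_of_integral_eq_top (hp : 0 < p) {g : X → ℝ≥0∞} (hg : Measurable g)
    (hfin : ∫⁻ x, g x ^ p ∂μ ≠ ⊤) (hΓ : ∀ γ ∈ Γ, γ.integral g = ⊤) : pathMod μ p Γ = 0 := by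
  have hscale (c : ℝ≥0) (hc : 0 < c) : pathMod μ p Γ ≤ (c : ℝ≥0∞) ^ p * ∫⁻ x, g x ^ p ∂μ := by
    have hadm : ∀ γ ∈ Γ, 1 ≤ γ.integral fun x => c * g x := fun γ hγ => by
      rw [γ.integral_const_mul ENNReal.coe_ne_top, hΓ γ hγ,
        ENNReal.mul_top (ENNReal.coe_pos.2 hc).ne']
      exact le_top
    refine (iInf₂_le _ ⟨hg.const_mul _, hadm⟩).trans_eq ?_
    simp_rw [ENNReal.mul_rpow_of_nonneg _ _ hp.le]
    rw [lintegral_const_mul _ (hg.pow_const p)]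
  have hcont : ContinuousAt (fun c : ℝ≥0 => (c : ℝ≥0∞) ^ p * ∫⁻ x, g x ^ p ∂μ) 0 :=
    ENNReal.Tendsto.mul_const ((ENNReal.continuous_rpow_const.comp
      ENNReal.continuous_coe).tendsto 0) (Or.inr hfin)
  have hlim : Tendsto (fun c : ℝ≥0 => (c : ℝ≥0∞) ^ p * ∫⁻ x, g x ^ p ∂μ) (𝓝[>] 0) (𝓝 0) := by
    simpa only [ENNReal.coe_zero, ENNReal.zero_rpow_of_pos hp, zero_mul] using
      hcont.tendsto.mono_left nhdsWithin_le_nhds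
  exact le_antisymm (ge_of_tendsto hlim (eventually_mem_nhdsWithin.mono hscale)) zero_le

end Modulus

/-! ### Lifts of competitors for `cap` are competitors for `capF` -/

section LiftedCompetitor

variable {T Tt : Type*} [MetricSpace T] [MetricSpace Tt] {π : Tt → T} {τ : Tt → Tt}
  {g : T → UnitAddCircle} {h : Tt → ℝ}

namespace IsDegreeOneLift

lemma integral_comp_eq_top (hh : IsDegreeOneLift π τ g h) (hπ : IsLocalIsometry π)
    {ρ k : T → ℝ≥0∞} (hk : ∀ γ : UPath T, ¬ edist (g γ.start) (g γ.finish) ≤ γ.integral ρ →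
      γ.integral k = ⊤) {γ : UPath Tt}
    (hγ : ¬ edist (h γ.start) (h γ.finish) ≤ γ.integral (ρ ∘ π)) :
    γ.integral (k ∘ π) = ⊤ := by
  by_contra hfin
  refine hγ (isLocalIsometry_coe_unitAddCircle.edist_le_lintegral γ.hab
    (hh.continuous.comp_continuousOn γ.lip.continuousOn) fun r s hr hrs hs => ?_)
  simp only [Function.comp_apply, hh.coe_eq]
  by_contra hlt
  have hsub : ((γ.map hπ).sub hr hrs hs).integral k = ⊤ := hk _ hlt
  exact hfin (top_le_iff.1 (hsub.symm.le.trans (lintegral_mono_set (Icc_subset_Icc hr hs))))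

variable [MeasurableSpace T] [MeasurableSpace Tt] [BorelSpace Tt] {x₀ : T} {α₀ : Path x₀ x₀}
  {μ : Measure T} {μt : Measure Tt} {p : ℝ} {ρ : T → ℝ≥0∞} [PathConnectedSpace T]

lemma pathMod_inSet_eq_zero (hh : IsDegreeOneLift π τ g h) (hcov : CoverSetup π)
    (hgen : IsGenerator x₀ α₀) (hdeck : IsDeck π x₀ α₀ τ) (hμt : IsLiftedMeasure π μ μt)
    (hπm : Measurable π) (hp : 0 < p) (hρ : IsWeakUpperGradient μ p g ρ) (n : ℕ) :
    pathMod μt p {γ | γ.InSet {y | |h y| ≤ n} ∧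
      ¬ edist (h γ.start) (h γ.finish) ≤ γ.integral (ρ ∘ π)} = 0 := by
  obtain ⟨k, hk, hktop, hkfin⟩ := exists_integral_eq_top_of_pathMod_eq_zero hp hρ one_pos
  set U : Set Tt := {y | |h y| ≤ n}
  have hU : MeasurableSet U := (isClosed_le hh.continuous.abs continuous_const).measurableSet
  refine pathMod_eq_zero_of_integral_eq_top hp ((hk.comp hπm).indicator hU) ?_ ?_
  · have hpow (y : Tt) : U.indicator (k ∘ π) y ^ p = U.indicator (fun y => k (π y) ^ p) y := by
      by_cases hy : y ∈ U
      · simp only [indicator_of_mem hy, Function.comp_apply]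
      · simp only [indicator_of_notMem hy, ENNReal.zero_rpow_of_pos hp]
    simp_rw [hpow, lintegral_indicator hU]
    refine ne_top_of_le_ne_top ?_ (hμt.setLIntegral_comp_le hπm hU
      (hh.encard_fiber_le hcov hgen hdeck fun y hy => hy) (hk.pow_const p))
    exact ENNReal.mul_ne_top (ENNReal.natCast_ne_top _)
      (ne_top_of_le_ne_top ENNReal.coe_ne_top hkfin)
  · rintro γ ⟨hγn, hγ⟩
    rw [← hh.integral_comp_eq_top hcov.2.2.1 hktop hγ]
    exact setLIntegral_congr_fun measurableSet_Icc fun t ht => indicator_of_mem (hγn t ht) _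

lemma isWeakUpperGradient (hh : IsDegreeOneLift π τ g h) (hcov : CoverSetup π)
    (hgen : IsGenerator x₀ α₀) (hdeck : IsDeck π x₀ α₀ τ) (hμt : IsLiftedMeasure π μ μt)
    (hπm : Measurable π) (hp : 0 < p) (hρ : IsWeakUpperGradient μ p g ρ) :
    IsWeakUpperGradient μt p h (ρ ∘ π) := by
  refine le_antisymm ?_ zero_le
  rw [← pathMod_iUnion_eq_zero hp (hh.pathMod_inSet_eq_zero hcov hgen hdeck hμt hπm hp hρ)]
  refine pathMod_mono le_rfl fun γ hγ => ?_
  have hcont : ContinuousOn (fun t => |h (γ.toFun t)|) (Icc γ.a γ.b) :=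
    (hh.continuous.comp_continuousOn γ.lip.continuousOn).abs
  obtain ⟨M, hM⟩ := isCompact_Icc.bddAbove_image hcont
  obtain ⟨n, hn⟩ := exists_nat_ge M
  exact mem_iUnion.2 ⟨n, fun t ht => (hM (mem_image_of_mem _ ht)).trans hn, hγ⟩

lemma memNloc [IsFiniteMeasure μ] (hh : IsDegreeOneLift π τ g h) (hcov : CoverSetup π)
    (hgen : IsGenerator x₀ α₀) (hdeck : IsDeck π x₀ α₀ τ) (hμt : IsLiftedMeasure π μ μt)
    (hπm : Measurable π) (hp : 0 < p) (hρm : Measurable ρ) (hρ : IsWeakUpperGradient μ p g ρ)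
    (hfin : ∫⁻ x, ρ x ^ p ∂μ ≠ ⊤) : MemNloc μt p h := by
  intro U hUo hUc
  obtain ⟨M, hM⟩ := hUc.bddAbove_image hh.continuous.abs.continuousOn
  obtain ⟨n, hn⟩ := exists_nat_ge M
  have hU : ∀ y ∈ U, |h y| ≤ n := fun y hy =>
    (hM (mem_image_of_mem _ (subset_closure hy))).trans hn
  have hle {k : T → ℝ≥0∞} (hk : Measurable k) :=
    hμt.setLIntegral_comp_le hπm hUo.measurableSet (hh.encard_fiber_le hcov hgen hdeck hU) hk
  refine ⟨?_, ρ ∘ π, hρm.comp hπm, ?_, ?_⟩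
  · calc ∫⁻ y in U, ENNReal.ofReal |h y| ^ p ∂μt ≤ ∫⁻ _ in U, (n : ℝ≥0∞) ^ p ∂μt :=
          setLIntegral_mono measurable_const fun y hy => ENNReal.rpow_le_rpow
            ((ENNReal.ofReal_le_ofReal (hU y hy)).trans_eq (ENNReal.ofReal_natCast n)) hp.le
      _ ≤ (4 * n + 1 : ℕ) * ∫⁻ _, (n : ℝ≥0∞) ^ p ∂μ := hle measurable_const
      _ < ⊤ := by
          rw [lintegral_const]
          finiteness
  · exact le_antisymm ((pathMod_mono Measure.restrict_le_self fun γ hγ => hγ.2).trans_eq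
      (hh.isWeakUpperGradient hcov hgen hdeck hμt hπm hp hρ)) zero_le
  · exact (hle (hρm.pow_const p)).trans_lt (ENNReal.mul_lt_top (ENNReal.natCast_lt_top _)
      hfin.lt_top)

end IsDegreeOneLift

lemma capF_le_cap [MeasurableSpace T] [BorelSpace T] [MeasurableSpace Tt] [BorelSpace Tt]
    {x₀ : T} {α₀ : Path x₀ x₀} {μ : Measure T} {μt : Measure Tt} {p : ℝ} [PathConnectedSpace T]
    [LocallyPathConnectedSpace T] [IsFiniteMeasure μ] (hcov : CoverSetup π)
    (hgen : IsGenerator x₀ α₀) (hdeck : IsDeck π x₀ α₀ τ) (hμt : IsLiftedMeasure π μ μt)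
    (hp : 0 < p) : capF μ π τ μt p ≤ cap μ p x₀ α₀ := by
  refine le_iInf₂ fun g hg => le_iInf₂ fun ρ ⟨hρm, hρ⟩ => ?_
  by_cases hfin : ∫⁻ x, ρ x ^ p ∂μ = ⊤
  · exact hfin ▸ le_top
  have hπm : Measurable π := hcov.1.continuous.measurable
  obtain ⟨h, hh⟩ := exists_isDegreeOneLift hcov hdeck hg.2
  exact iInf₂_le ρ ⟨hρm, h, hh.memNloc hcov hgen hdeck hμt hπm hp hρm hρ hfin,
    .of_forall fun y => by rw [hh.map_deck, add_sub_cancel_left],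
    hh.isWeakUpperGradient hcov hgen hdeck hμt hπm hp hρ⟩

end LiftedCompetitor

/-! ### Descent to the base -/

lemma IsUpperGradientAlong.continuousOn {Y : Type*} [PseudoEMetricSpace Y] {H : ℝ → Y}
    {ρ : ℝ → ℝ≥0∞} {a b : ℝ} (hH : IsUpperGradientAlong H ρ a b)
    (hfin : ∫⁻ t in Icc a b, ρ t ≠ ⊤) : ContinuousOn H (Icc a b) := by
  refine EMetric.continuousOn_iff.2 fun t ht ε hε => ?_
  obtain ⟨δ, hδ, hsmall⟩ := exists_pos_setLIntegral_lt_of_measure_lt hfin hε.ne'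
  have hlt {x y : ℝ} (hx : x ∈ Icc a b) (hy : y ∈ Icc a b) (hxy : x ≤ y) (hd : edist x y < δ) :
      edist (H x) (H y) < ε := by
    have hvol : volume.restrict (Icc a b) (Icc x y) < δ := by
      refine (Measure.restrict_apply_le _ _).trans_lt ?_
      rwa [← setLIntegral_one, lintegral_Icc_const 1 hxy, one_mul]
    have hint := hsmall _ hvol
    rw [Measure.restrict_restrict_of_subset (Icc_subset_Icc hx.1 hy.2)] at hint
    exact (hH hx.1 hxy hy.2).trans_lt hint
  refine ⟨δ, hδ, fun s hs hst => ?_⟩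
  rcases le_total s t with h | h
  · exact hlt hs ht h hst
  · rw [edist_comm] at hst ⊢
    exact hlt ht hs h hst

lemma IsUpperGradient.along_lift {T Tt : Type*} [PseudoMetricSpace Tt] {π : Tt → T}
    {f : Tt → ℝ} {ρ : T → ℝ≥0∞} (hf : IsUpperGradient f (ρ ∘ π)) {γ : ℝ → T} {γt : ℝ → Tt} {a b : ℝ}
    (hγt : LipschitzOnWith 1 γt (Icc a b)) (hπ : EqOn (π ∘ γt) γ (Icc a b)) :
    IsUpperGradientAlong (f ∘ γt) (ρ ∘ γ) a b := fun s t hs hst ht => by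
  have hsub : Icc s t ⊆ Icc a b := Icc_subset_Icc hs ht
  refine (hf ⟨s, t, hst, γt, hγt.mono hsub⟩).trans_eq ?_
  exact setLIntegral_congr_fun measurableSet_Icc fun r hr => congr_arg ρ (hπ (hsub hr))

section Descent

variable {T Tt : Type*} [MetricSpace T] [MetricSpace Tt] {x₀ : T} {α₀ : Path x₀ x₀} {π : Tt → T}
  {τ : Tt → Tt} {h f : Tt → ℝ} {g : T → UnitAddCircle}

lemma IsDeck.isLocalIsometry (hdeck : IsDeck π x₀ α₀ τ) (hπ : IsLocalIsometry π) :
    IsLocalIsometry τ := by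
  intro x
  obtain ⟨ε₁, hε₁, hiso₁⟩ := hπ x
  obtain ⟨ε₂, hε₂, hiso₂⟩ := hπ (τ x)
  obtain ⟨δ, hδ, hτ⟩ := Metric.continuous_iff.1 hdeck.1 x ε₂ hε₂
  refine ⟨min ε₁ δ, lt_min hε₁ hδ, fun y hy z hz => ?_⟩
  obtain ⟨hy₁, hyδ⟩ := lt_min_iff.1 (mem_ball.1 hy)
  obtain ⟨hz₁, hzδ⟩ := lt_min_iff.1 (mem_ball.1 hz)
  rw [← hiso₂ (τ y) (hτ y hyδ) (τ z) (hτ z hzδ), hdeck.2.1, hdeck.2.1, hiso₁ y hy₁ z hz₁]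

namespace IsDegreeOneLift

lemma lipschitzOnWith_comp (hh : IsDegreeOneLift π τ g h) {L : ℝ≥0} (hL : LipschitzWith L g)
    {γ : ℝ → Tt} {a b : ℝ} (hγ : LipschitzOnWith 1 γ (Icc a b)) (hπ : IsLocalIsometry π) :
    LipschitzOnWith L (h ∘ γ) (Icc a b) := by
  rw [← isLocalIsometry_coe_unitAddCircle.lipschitzOnWith_comp_iff
    (hh.continuous.comp_continuousOn hγ.continuousOn)]
  have hcomp : (↑) ∘ h ∘ γ = g ∘ π ∘ γ := funext fun t => hh.coe_eq (γ t)
  rw [hcomp]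
  simpa only [mul_one] using
    hL.comp_lipschitzOnWith ((hπ.lipschitzOnWith_comp_iff hγ.continuousOn).2 hγ)

lemma iterate_deck (hh : IsDegreeOneLift π τ g h) (hdeck : IsDeck π x₀ α₀ τ) {x : T}
    (hf : ∀ y, π y = x → f (τ y) = f y + 1) {e : Tt} (he : π e = x) (n : ℕ) :
    π (τ^[n] e) = x ∧ h (τ^[n] e) = h e + n ∧ f (τ^[n] e) = f e + n := by
  induction n with
  | zero => simp [he]
  | succ n ih =>
    obtain ⟨hπn, hhn, hfn⟩ := ih
    rw [Function.iterate_succ_apply', hdeck.2.1, hh.map_deck, hf _ hπn, hhn, hfn]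
    push_cast
    exact ⟨hπn, by ring, by ring⟩

/-- Fibers are orbits of the deck transformation, which raises both `f` and `h` by one. -/
lemma sub_eq_of_fiber [PathConnectedSpace T] (hh : IsDegreeOneLift π τ g h) (hcov : CoverSetup π)
    (hgen : IsGenerator x₀ α₀) (hdeck : IsDeck π x₀ α₀ τ) {x : T}
    (hf : ∀ y, π y = x → f (τ y) = f y + 1) {e e' : Tt} (he : π e = x) (he' : π e' = x) :
    f e - h e = f e' - h e' := by
  have hnat {e e' : Tt} (he : π e = x) (he' : π e' = x) (n : ℕ) (hn : h e' = h e + n) :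
      f e - h e = f e' - h e' := by
    obtain ⟨hπn, hhn, hfn⟩ := hh.iterate_deck hdeck hf he n
    obtain rfl : τ^[n] e = e' :=
      hh.eq_of_eq hcov hgen hdeck (hπn.trans he'.symm) (hhn.trans hn.symm)
    rw [hhn, hfn, add_sub_add_right_eq_sub]
  obtain ⟨k, hk⟩ := hh.exists_int_of_fiber (he.trans he'.symm)
  obtain ⟨n, rfl | rfl⟩ := Int.eq_nat_or_neg k
  · exact hnat he he' n (by simpa using hk)
  · refine (hnat he' he n ?_).symm
    push_cast at hk
    linarith

end IsDegreeOneLift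

variable {ρ : T → ℝ≥0∞} [MeasurableSpace T] [BorelSpace T]

lemma UPath.aemeasurable_comp (γ : UPath T) (hρ : Measurable ρ) :
    AEMeasurable (fun t => ρ (γ.toFun t)) (volume.restrict (Icc γ.a γ.b)) :=
  hρ.comp_aemeasurable (γ.lip.continuousOn.aemeasurable measurableSet_Icc)

/-- Along a lift of `γ`, both `f ∘ τ` and `f + 1` are continuous, and they agree almost
everywhere since `ρ` is almost everywhere finite. -/
lemma IsUpperGradient.deck_apply_eq (hf : IsUpperGradient f (ρ ∘ π)) (hcov : CoverSetup π)
    (hdeck : IsDeck π x₀ α₀ τ) (hρ : Measurable ρ)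
    (hfτ : ∀ y, ρ (π y) ≠ ⊤ → f (τ y) = f y + 1) (γ : UPath T) (hab : γ.a < γ.b)
    (hfin : γ.integral ρ ≠ ⊤) {t : ℝ} (ht : t ∈ Icc γ.a γ.b) {y : Tt} (hy : π y = γ.toFun t) :
    f (τ y) = f y + 1 := by
  obtain ⟨γt, hγt, rfl, hπγ⟩ := hcov.exists_lift_uPath γ ht hy
  have hτγ : LipschitzOnWith 1 (τ ∘ γt) (Icc γ.a γ.b) :=
    ((hdeck.isLocalIsometry hcov.2.2.1).lipschitzOnWith_comp_iff hγt.continuousOn).2 hγt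
  have hπτγ : EqOn (π ∘ τ ∘ γt) γ.toFun (Icc γ.a γ.b) := fun r hr =>
    (hdeck.2.1 _).trans (hπγ hr)
  have hcont := (hf.along_lift hγt hπγ).continuousOn hfin
  have hcontτ := (hf.along_lift hτγ hπτγ).continuousOn hfin
  have hae : f ∘ τ ∘ γt =ᵐ[volume.restrict (Icc γ.a γ.b)] fun r => f (γt r) + 1 := by
    filter_upwards [ae_lt_top' (γ.aemeasurable_comp hρ) hfin,
      ae_restrict_mem measurableSet_Icc] with r hr hrI
    exact hfτ _ ((congr_arg ρ (hπγ hrI)).trans_lt hr).ne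
  exact Measure.eqOn_Icc_of_ae_eq volume hab.ne hae hcontτ (hcont.add continuousOn_const) ht

/-- Along the path `γ`, the circle valued map `g + [v]` has the real lift `k + v ∘ γ`, where `k` is
an `L`-Lipschitz lift of `g ∘ γ`, and `ρ` is an upper gradient of this lift. The regularity of `v`
along `γ` is thus recorded without reference to the universal cover. -/
def IsLiftedUpperGradientAlong (g : T → UnitAddCircle) (v : T → ℝ) (L : ℝ≥0) (ρ : T → ℝ≥0∞)
    (γ : UPath T) : Prop :=
  ∃ k : ℝ → ℝ, LipschitzOnWith L k (Icc γ.a γ.b) ∧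
    (∀ t ∈ Icc γ.a γ.b, (k t : UnitAddCircle) = g (γ.toFun t)) ∧
    IsUpperGradientAlong (fun t => k t + v (γ.toFun t)) (ρ ∘ γ.toFun) γ.a γ.b

/-- The difference `f - h` descends to `v`. -/
lemma IsDegreeOneLift.exists_descent [PathConnectedSpace T] (hh : IsDegreeOneLift π τ g h)
    (hcov : CoverSetup π) (hgen : IsGenerator x₀ α₀) (hdeck : IsDeck π x₀ α₀ τ) {L : ℝ≥0}
    (hL : LipschitzWith L g) (hρ : Measurable ρ) (hf : IsUpperGradient f (ρ ∘ π))
    (hfτ : ∀ y, ρ (π y) ≠ ⊤ → f (τ y) = f y + 1) :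
    ∃ v : T → ℝ, ∀ γ : UPath T, γ.integral ρ ≠ ⊤ → IsLiftedUpperGradientAlong g v L ρ γ := by
  choose e he using hcov.2.1
  refine ⟨fun x => f (e x) - h (e x), fun γ hfin => ?_⟩
  obtain ⟨γt, hγt, -, hπγ⟩ := hcov.exists_lift_uPath γ (left_mem_Icc.2 γ.hab) (he _)
  refine ⟨h ∘ γt, hh.lipschitzOnWith_comp hL hγt hcov.2.2.1,
    fun t ht => (hh.coe_eq _).trans (congr_arg g (hπγ ht)), fun s t hs hst ht => ?_⟩
  rcases hst.eq_or_lt with rfl | hlt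
  · simp only [edist_self, zero_le]
  have hab : γ.a < γ.b := hs.trans_lt (hlt.trans_le ht)
  have hval {r : ℝ} (hr : r ∈ Icc γ.a γ.b) :
      h (γt r) + (f (e (γ.toFun r)) - h (e (γ.toFun r))) = f (γt r) := by
    rw [hh.sub_eq_of_fiber hcov hgen hdeck
      (fun y hy => hf.deck_apply_eq hcov hdeck hρ hfτ γ hab hfin hr hy) (he _) (hπγ hr)]
    ring
  simp only [Function.comp_apply, hval ⟨hs, hst.trans ht⟩, hval ⟨hs.trans hst, ht⟩]
  exact hf.along_lift hγt hπγ hs hst ht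

end Descent

section LiftedUpperGradient

namespace IsLiftedUpperGradientAlong

variable {T : Type*} [MetricSpace T] {g : T → UnitAddCircle} {v w : T → ℝ} {L M : ℝ≥0}
  {ρ : T → ℝ≥0∞} {γ : UPath T}

lemma edist_le (hv : IsLiftedUpperGradientAlong g v L ρ γ) :
    edist (v γ.start) (v γ.finish) ≤ γ.integral fun x => ρ x + L := by
  obtain ⟨k, hk, -, hkv⟩ := hv
  have hsub : edist (v γ.start) (v γ.finish) ≤
      edist (k γ.a + v γ.start) (k γ.b + v γ.finish) + edist (k γ.a) (k γ.b) := by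
    simpa only [neg_add_cancel_comm, edist_neg_neg, ← sub_eq_add_neg, add_sub_cancel_left] using
      edist_add_add_le (k γ.a + v γ.start) (-k γ.a) (k γ.b + v γ.finish) (-k γ.b)
  calc edist (v γ.start) (v γ.finish)
      ≤ edist (k γ.a + v γ.start) (k γ.b + v γ.finish) + edist (k γ.a) (k γ.b) := hsub
    _ ≤ γ.integral ρ + L * edist γ.a γ.b :=
        add_le_add (hkv le_rfl γ.hab le_rfl) (hk (left_mem_Icc.2 γ.hab) (right_mem_Icc.2 γ.hab))
    _ = γ.integral fun x => ρ x + L := by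
        rw [UPath.integral, UPath.integral, lintegral_add_right _ measurable_const,
          lintegral_Icc_const _ γ.hab]

variable [MeasurableSpace T] [BorelSpace T]

open scoped Classical in
lemma edist_add_coe_le (hv : IsLiftedUpperGradientAlong g v L ρ γ) (hρ : Measurable ρ)
    (hfin : γ.integral ρ ≠ ⊤) (hw : LipschitzWith M w) {W : Set T} (hwv : EqOn w v Wᶜ) :
    edist (g γ.start + (w γ.start : UnitAddCircle)) (g γ.finish + (w γ.finish : UnitAddCircle)) ≤
      γ.integral (W.piecewise (fun _ => ((L + M : ℝ≥0) : ℝ≥0∞)) ρ) := by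
  obtain ⟨k, hk, hkg, hkv⟩ := hv
  have hkw : LipschitzOnWith (L + M) (fun t => k t + w (γ.toFun t)) (Icc γ.a γ.b) := by
    have hwγ := hw.comp_lipschitzOnWith γ.lip
    rw [mul_one] at hwγ
    exact hk.add hwγ
  rw [UPath.start, UPath.finish, ← hkg _ (left_mem_Icc.2 γ.hab), ← hkg _ (right_mem_Icc.2 γ.hab),
    ← AddCircle.coe_add, ← AddCircle.coe_add]
  refine (edist_coe_unitAddCircle_le _ _).trans (edist_le_lintegral_of_eqOn
    (E := γ.toFun ⁻¹' Wᶜ) γ.hab hkw (γ.aemeasurable_comp hρ) hfin hkv ?_ ?_ ?_)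
  · exact fun t ht => congr_arg (k t + ·) (hwv ht.1)
  · exact fun t ht => (piecewise_eq_of_notMem _ _ _ ht.1).ge
  · exact fun t ht =>
      (piecewise_eq_of_mem W (fun _ => ((L + M : ℝ≥0) : ℝ≥0∞)) ρ (not_not.1 ht.2)).ge

end IsLiftedUpperGradientAlong

end LiftedUpperGradient

/-! ### Lipschitz competitors of controlled energy -/

lemma lintegral_piecewise_const_rpow_le {X : Type*} [MeasurableSpace X] {μ : Measure X}
    {ρ : X → ℝ≥0∞} (hρ : Measurable ρ) {W : Set X} [DecidablePred (· ∈ W)]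
    (hW : MeasurableSet W) (c : ℝ≥0∞) (p : ℝ) :
    ∫⁻ x, (W.piecewise (fun _ => c) ρ x) ^ p ∂μ ≤ ∫⁻ x, ρ x ^ p ∂μ + c ^ p * μ W := by
  rw [← setLIntegral_const, ← lintegral_indicator hW, ← lintegral_add_left (hρ.pow_const p)]
  refine lintegral_mono fun x => ?_
  by_cases hx : x ∈ W
  · simpa only [piecewise_eq_of_mem _ _ _ hx, indicator_of_mem hx] using le_add_self
  · simpa only [piecewise_eq_of_notMem _ _ _ hx] using le_self_add

section LowerBound

variable {T Tt : Type*} [MetricSpace T] [MetricSpace Tt] {x₀ : T} {α₀ : Path x₀ x₀} {π : Tt → T}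
  {τ : Tt → Tt} {h f : Tt → ℝ} {g : T → UnitAddCircle} {v w : T → ℝ} {L M : ℝ≥0} {ρ : T → ℝ≥0∞}
  [MeasurableSpace T] [BorelSpace T] {μ : Measure T} {p : ℝ}

/-- The map `g + [w]` competes in the definition of `cap`, with the weak upper gradient which is
`ρ` off a measurable hull of `B` and `L + M` on it. -/
lemma cap_le_lintegral_add_of_eqOn_compl (hcov : CoverSetup π) (hdeck : IsDeck π x₀ α₀ τ)
    (hh : IsDegreeOneLift π τ g h) (hL : LipschitzWith L g) (hp : 0 < p) (hρ : Measurable ρ)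
    (hfin : ∫⁻ x, ρ x ^ p ∂μ ≠ ⊤)
    (hv : ∀ γ : UPath T, γ.integral ρ ≠ ⊤ → IsLiftedUpperGradientAlong g v L ρ γ)
    (hw : LipschitzWith M w) {B : Set T} (hwv : EqOn w v Bᶜ) :
    cap μ p x₀ α₀ ≤ ∫⁻ x, ρ x ^ p ∂μ + ((L + M : ℝ≥0) : ℝ≥0∞) ^ p * μ B := by
  classical
  set W := toMeasurable μ B
  have hW : MeasurableSet W := measurableSet_toMeasurable μ B
  have hwvW : EqOn w v Wᶜ := hwv.mono (compl_subset_compl.2 (subset_toMeasurable μ B))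
  have hlip : LipschitzWith (L + M) fun x => g x + (w x : UnitAddCircle) :=
    hL.add fun x y => (edist_coe_unitAddCircle_le _ _).trans (hw x y)
  have hdeg : HasDegree x₀ α₀ (fun x => g x + (w x : UnitAddCircle)) 1 :=
    (hh.add_comp hcov hdeck hw.continuous).hasDegree_one hcov hdeck
  have hweak : IsWeakUpperGradient μ p (fun x => g x + (w x : UnitAddCircle))
      (W.piecewise (fun _ => ((L + M : ℝ≥0) : ℝ≥0∞)) ρ) := by
    refine pathMod_eq_zero_of_integral_eq_top hp hρ hfin fun γ hγ => ?_
    by_contra htop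
    exact hγ ((hv γ htop).edist_add_coe_le hρ htop hw hwvW)
  calc cap μ p x₀ α₀ ≤ ∫⁻ x, (W.piecewise (fun _ => ((L + M : ℝ≥0) : ℝ≥0∞)) ρ x) ^ p ∂μ :=
        (iInf₂_le _ ⟨⟨_, hlip⟩, hdeg⟩).trans
          (iInf₂_le _ ⟨Measurable.piecewise hW measurable_const hρ, hweak⟩)
    _ ≤ ∫⁻ x, ρ x ^ p ∂μ + ((L + M : ℝ≥0) : ℝ≥0∞) ^ p * μ B := by
        rw [← measure_toMeasurable B]
        exact lintegral_piecewise_const_rpow_le hρ hW _ p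

variable [CompactSpace T] [IsFiniteMeasure μ] {C : ℝ≥0} {CP lP : ℝ}

lemma exists_lipschitzOnWith_compl_lt_maximalFunction (hC : IsUniformlyDoubling μ C)
    (hP : SupportsPoincare μ CP lP) (hρ : LowerSemicontinuous ρ)
    (hv : ∀ γ : UPath T, γ.integral ρ ≠ ⊤ → IsLiftedUpperGradientAlong g v L ρ γ) :
    ∃ K : ℝ≥0, ∀ n : ℕ, LipschitzOnWith (K * n) v
      {x | n < maximalFunction μ (fun z => ρ z + (L + 1)) x}ᶜ := by
  obtain ⟨K, hK⟩ := exists_uPath_integral_le hC hP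
  refine ⟨K, fun n x hx y hy => ?_⟩
  obtain ⟨γ, rfl, rfl, hγ⟩ := hK (fun z => ρ z + (L + 1)) (hρ.add lowerSemicontinuous_const)
    (fun _ => le_add_left le_add_self) n x y
    (by simpa using hx) (by simpa using hy)
  have hfin : γ.integral (fun z => ρ z + (L + 1)) ≠ ⊤ := ne_top_of_le_ne_top (by finiteness) hγ
  have hlift := hv γ (ne_top_of_le_ne_top hfin (lintegral_mono fun _ => le_self_add))
  calc edist (v γ.start) (v γ.finish) ≤ γ.integral fun z => ρ z + L := hlift.edist_le
    _ ≤ γ.integral fun z => ρ z + (L + 1) :=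
        lintegral_mono fun _ => add_le_add le_rfl le_self_add
    _ ≤ (K * n : ℝ≥0) * edist γ.start γ.finish := by rwa [ENNReal.coe_mul]

/-- The function `v` is `K * n`-Lipschitz off a set of measure `o(n ^ (-p))`, so replacing it by a
Lipschitz extension from there costs an energy tending to zero. -/
lemma cap_le_lintegral_of_isLiftedUpperGradientAlong (hC : IsUniformlyDoubling μ C)
    (hP : SupportsPoincare μ CP lP) (hcov : CoverSetup π) (hdeck : IsDeck π x₀ α₀ τ)
    (hh : IsDegreeOneLift π τ g h) (hL : LipschitzWith L g) (hp : 1 ≤ p)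
    (hρ : LowerSemicontinuous ρ) (hfin : ∫⁻ x, ρ x ^ p ∂μ ≠ ⊤)
    (hv : ∀ γ : UPath T, γ.integral ρ ≠ ⊤ → IsLiftedUpperGradientAlong g v L ρ γ) :
    cap μ p x₀ α₀ ≤ ∫⁻ x, ρ x ^ p ∂μ := by
  have hp₀ : 0 < p := by linarith
  obtain ⟨K, hK⟩ := exists_lipschitzOnWith_compl_lt_maximalFunction hC hP hρ hv
  set B : ℕ → Set T := fun n => {x | n < maximalFunction μ (fun z => ρ z + (L + 1)) x}
  have hshift : ∫⁻ x, (ρ x + (L + 1)) ^ p ∂μ ≠ ⊤ := by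
    refine (ENNReal.lintegral_rpow_add_lt_top_of_lintegral_rpow_lt_top hρ.measurable.aemeasurable
      hfin.lt_top (g := fun _ => (L + 1 : ℝ≥0∞)) ?_ hp).ne
    rw [lintegral_const]
    finiteness
  have hbound (n : ℕ) (hn : 1 ≤ n) : cap μ p x₀ α₀ ≤
      ∫⁻ x, ρ x ^ p ∂μ + ((L + K : ℝ≥0) : ℝ≥0∞) ^ p * (n ^ p * μ (B n)) := by
    obtain ⟨w, hw, hvw⟩ := (hK n).extend_real
    have hconst : L + K * n ≤ (L + K) * n := by
      rw [add_mul]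
      exact add_le_add (le_mul_of_one_le_right' (mod_cast hn)) le_rfl
    refine (cap_le_lintegral_add_of_eqOn_compl hcov hdeck hh hL hp₀ hρ.measurable hfin hv hw
      hvw.symm).trans ?_
    rw [← mul_assoc, ← ENNReal.mul_rpow_of_nonneg _ _ hp₀.le]
    gcongr
    exact_mod_cast hconst
  have hlim : Tendsto (fun n : ℕ => ∫⁻ x, ρ x ^ p ∂μ +
      ((L + K : ℝ≥0) : ℝ≥0∞) ^ p * (n ^ p * μ (B n))) atTop (𝓝 (∫⁻ x, ρ x ^ p ∂μ)) := by
    have htail : Tendsto (fun n : ℕ => (n : ℝ≥0∞) ^ p * μ (B n)) atTop (𝓝 0) :=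
      tendsto_rpow_mul_measure_lt_maximalFunction hC (hρ.measurable.add measurable_const) hp hshift
    simpa only [mul_zero, add_zero] using tendsto_const_nhds.add (ENNReal.Tendsto.const_mul htail
      (Or.inr (ENNReal.rpow_ne_top_of_nonneg hp₀.le ENNReal.coe_ne_top)))
  exact ge_of_tendsto hlim ((eventually_ge_atTop 1).mono hbound)

end LowerBound

/-! ### Lower semicontinuous upper gradients -/

section LowerSemicontinuousMajorant

lemma exists_pos_lintegral_add_rpow_lt {X : Type*} [MeasurableSpace X] {μ : Measure X}
    {ρ : X → ℝ≥0∞} (hρ : Measurable ρ) {p : ℝ} (hp : 1 ≤ p) {C : ℝ≥0∞}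
    (hC : ∫⁻ x, ρ x ^ p ∂μ < C) :
    ∃ ε : ℝ≥0, 0 < ε ∧ ∀ G : X → ℝ≥0∞, Measurable G → ∫⁻ x, G x ^ p ∂μ ≤ ε →
      ∫⁻ x, (ρ x + G x) ^ p ∂μ < C := by
  have hp₀ : 0 < p := by linarith
  have hcont : Continuous fun ε : ℝ≥0 =>
      ((∫⁻ x, ρ x ^ p ∂μ) ^ (1 / p) + (ε : ℝ≥0∞) ^ (1 / p)) ^ p :=
    ENNReal.continuous_rpow_const.comp (continuous_const.add
      (ENNReal.continuous_rpow_const.comp ENNReal.continuous_coe))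
  have hsmall : ∀ᶠ ε : ℝ≥0 in 𝓝[>] 0,
      ((∫⁻ x, ρ x ^ p ∂μ) ^ (1 / p) + (ε : ℝ≥0∞) ^ (1 / p)) ^ p < C := by
    refine (hcont.continuousAt.tendsto.mono_left nhdsWithin_le_nhds).eventually_lt_const ?_
    rwa [ENNReal.coe_zero, ENNReal.zero_rpow_of_pos (by positivity), add_zero, ← ENNReal.rpow_mul,
      one_div_mul_cancel hp₀.ne', ENNReal.rpow_one]
  obtain ⟨ε, hεC, hε⟩ := (hsmall.and eventually_mem_nhdsWithin).exists
  refine ⟨ε, hε, fun G hG hGε => hεC.trans_le' ?_⟩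
  have hminkowski := ENNReal.rpow_le_rpow
    (ENNReal.lintegral_Lp_add_le hρ.aemeasurable hG.aemeasurable hp (μ := μ)) hp₀.le
  rw [← ENNReal.rpow_mul, one_div_mul_cancel hp₀.ne', ENNReal.rpow_one] at hminkowski
  refine hminkowski.trans ?_
  gcongr

lemma exists_lowerSemicontinuous_ge_lintegral_rpow_le {X : Type*} [TopologicalSpace X]
    [MeasurableSpace X] [BorelSpace X] {μ : Measure X} [μ.WeaklyRegular] [SigmaFinite μ]
    {φ : X → ℝ≥0∞} (hφ : Measurable φ) {p : ℝ} (hp : 0 < p) {C : ℝ≥0∞}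
    (hC : ∫⁻ x, φ x ^ p ∂μ < C) :
    ∃ q : X → ℝ≥0∞, LowerSemicontinuous q ∧ (∀ x, φ x ≤ q x) ∧ ∫⁻ x, q x ^ p ∂μ ≤ C := by
  obtain ⟨q, hφq, hq, hqint⟩ := exists_le_lowerSemicontinuous_lintegral_ge μ (fun x => φ x ^ p)
    (hφ.pow_const p) (tsub_pos_of_lt hC).ne'
  refine ⟨fun x => q x ^ (1 / p), ?_, fun x => ?_, ?_⟩
  · exact ENNReal.continuous_rpow_const.comp_lowerSemicontinuous hq
      (ENNReal.monotone_rpow_of_nonneg (one_div_nonneg.2 hp.le))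
  · rw [one_div, ENNReal.le_rpow_inv_iff hp]
    exact hφq x
  · simp_rw [← ENNReal.rpow_mul, one_div_mul_cancel hp.ne', ENNReal.rpow_one]
    exact hqint.trans_eq (add_tsub_cancel_of_le hC.le)

lemma IsWeakUpperGradient.exists_exceptional {X Y : Type*} [PseudoMetricSpace X]
    [MeasurableSpace X] [PseudoEMetricSpace Y] {μ : Measure X} {p : ℝ} {u : X → Y} {ρ : X → ℝ≥0∞}
    (hu : IsWeakUpperGradient μ p u ρ) (hp : 0 < p) {N : Set X} (hN : μ N = 0) {ε : ℝ≥0}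
    (hε : 0 < ε) :
    ∃ k : X → ℝ≥0∞, Measurable k ∧ ∫⁻ x, k x ^ p ∂μ ≤ ε ∧ (∀ x ∈ N, k x = ⊤) ∧
      ∀ γ : UPath X, γ.integral k ≠ ⊤ → edist (u γ.start) (u γ.finish) ≤ γ.integral ρ := by
  obtain ⟨k, hk, hktop, hkε⟩ := exists_integral_eq_top_of_pathMod_eq_zero hp hu hε
  set A := toMeasurable μ N
  refine ⟨k + A.indicator ⊤, ?_, ?_, fun x hx => ?_, fun γ hγ => ?_⟩
  · exact hk.add (measurable_const.indicator (measurableSet_toMeasurable μ N))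
  · refine (lintegral_congr_ae ?_).trans_le hkε
    have hA : μ A = 0 := (measure_toMeasurable N).trans hN
    filter_upwards [measure_eq_zero_iff_ae_notMem.1 hA] with x hx
    rw [Pi.add_apply, indicator_of_notMem hx, add_zero]
  · rw [Pi.add_apply, indicator_of_mem (subset_toMeasurable μ N hx), Pi.top_apply, add_top]
  · by_contra hne
    exact hγ (top_le_iff.1 ((hktop γ hne).ge.trans (lintegral_mono fun _ => le_self_add)))

variable {T Tt : Type*} [MetricSpace T] [MetricSpace Tt] {π : Tt → T} {τ : Tt → Tt} {f : Tt → ℝ}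
  {ρ : T → ℝ≥0∞} [MeasurableSpace T] [BorelSpace T] {μ : Measure T} [IsFiniteMeasure μ]
  [MeasurableSpace Tt] [BorelSpace Tt] [SecondCountableTopology Tt] {μt : Measure Tt} {p : ℝ}

/-- A function `k` of small energy is infinite on the exceptional set and has infinite integral
along the exceptional paths; adding to `ρ` a majorant of `k` on the base removes both exceptions. -/
lemma IsWeakUpperGradient.exists_lowerSemicontinuous_isUpperGradient
    (hf : IsWeakUpperGradient μt p f (ρ ∘ π)) (hπ : IsLocalHomeomorph π)
    (hμt : IsLiftedMeasure π μ μt) (hp : 1 ≤ p) (hρ : Measurable ρ)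
    (hfτ : ∀ᵐ y ∂μt, f (τ y) - f y = 1) {C : ℝ≥0∞} (hC : ∫⁻ x, ρ x ^ p ∂μ < C) :
    ∃ q : T → ℝ≥0∞, LowerSemicontinuous q ∧ ∫⁻ x, q x ^ p ∂μ ≤ C ∧
      IsUpperGradient f (q ∘ π) ∧ ∀ y, q (π y) ≠ ⊤ → f (τ y) = f y + 1 := by
  have hp₀ : 0 < p := by linarith
  obtain ⟨ε, hε, hεC⟩ := exists_pos_lintegral_add_rpow_lt hρ hp hC
  obtain ⟨k, hk, hkε, hkN, hkγ⟩ := hf.exists_exceptional hp₀ (ae_iff.1 hfτ) hε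
  obtain ⟨G, hG, hkG, hGk⟩ := hμt.exists_le_comp_lintegral_rpow_le hπ hk hp₀
  obtain ⟨q, hq, hρGq, hqC⟩ := exists_lowerSemicontinuous_ge_lintegral_rpow_le (hρ.add hG) hp₀
    (hεC G hG (hGk.trans hkε))
  have hρq (y : Tt) : ρ (π y) ≤ q (π y) := le_self_add.trans (hρGq _)
  have hkq (y : Tt) : k y ≤ q (π y) := (hkG y).trans (le_add_self.trans (hρGq _))
  refine ⟨q, hq, hqC, fun γ => ?_, fun y hy => ?_⟩
  · by_cases hγ : γ.integral k = ⊤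
    · exact le_top.trans (hγ.ge.trans (lintegral_mono fun t => hkq _))
    · exact (hkγ γ hγ).trans (lintegral_mono fun t => hρq _)
  · by_contra hne
    exact hy (top_le_iff.1 ((hkN y fun hy' => hne (sub_eq_iff_eq_add'.1 hy')).ge.trans (hkq y)))

end LowerSemicontinuousMajorant

lemma cap_le_capF {T Tt : Type*} [MetricSpace T] [MeasurableSpace T] [BorelSpace T]
    [CompactSpace T] [PathConnectedSpace T] [LocallyPathConnectedSpace T] [MetricSpace Tt]
    [MeasurableSpace Tt] [BorelSpace Tt] {μ : Measure T} [IsFiniteMeasure μ] {μt : Measure Tt}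
    {C : ℝ≥0} {CP lP : ℝ} {x₀ : T} {α₀ : Path x₀ x₀} {π : Tt → T} {τ : Tt → Tt}
    {g : T → UnitAddCircle} {p : ℝ} (hC : IsUniformlyDoubling μ C)
    (hP : SupportsPoincare μ CP lP) (hcov : CoverSetup π) (hgen : IsGenerator x₀ α₀)
    (hdeck : IsDeck π x₀ α₀ τ) (hμt : IsLiftedMeasure π μ μt) (hp : 1 ≤ p)
    (hg : DegOneLip x₀ α₀ g) : cap μ p x₀ α₀ ≤ capF μ π τ μt p := by
  obtain ⟨⟨L, hL⟩, hg₁⟩ := hg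
  obtain ⟨h, hh⟩ := exists_isDegreeOneLift hcov hdeck hg₁
  have := separableSpace_of_countable_fiber hcov.1.isLocalHomeomorph.isOpenMap
    (hh.countable_fiber hcov hgen hdeck)
  have := UniformSpace.secondCountable_of_separable Tt
  refine le_iInf₂ fun ρ ⟨hρ, f, _, hfτ, hf⟩ => le_of_forall_gt_imp_ge_of_dense fun D hD => ?_
  rcases eq_or_ne D ⊤ with rfl | hDtop
  · exact le_top
  obtain ⟨q, hq, hqD, hfq, hfτq⟩ := hf.exists_lowerSemicontinuous_isUpperGradient
    hcov.1.isLocalHomeomorph hμt hp hρ hfτ hD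
  obtain ⟨v, hv⟩ := hh.exists_descent hcov hgen hdeck hL hq.measurable hfq hfτq
  exact (cap_le_lintegral_of_isLiftedUpperGradientAlong hC hP hcov hdeck hh hL hp hq
    (ne_top_of_le_ne_top hDtop hqD) hv).trans hqD

end Duality

open Duality in
theorem statement7_general {T Tt : Type*} [MetricSpace T] [MeasurableSpace T] [BorelSpace T]
    [CompactSpace T] [MetricSpace Tt] [MeasurableSpace Tt] [BorelSpace Tt] {μ : Measure T}
    {μt : Measure Tt} {Cμ : ℝ≥0∞} {CP lP : ℝ} {x₀ : T} {α₀ : Path x₀ x₀} {π : Tt → T} {τ : Tt → Tt}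
    {g : T → UnitAddCircle} (hdoub : IsDoubling μ Cμ) (hP : SupportsPoincare μ CP lP)
    (hgen : IsGenerator x₀ α₀) (hg : DegOneLip x₀ α₀ g) (hcov : CoverSetup π)
    (hdeck : IsDeck π x₀ α₀ τ) (hμt : IsLiftedMeasure π μ μt) {p : ℝ} (hp : 1 ≤ p) :
    cap μ p x₀ α₀ = capF μ π τ μt p := by
  have : Nonempty T := ⟨x₀⟩
  have := hP.isFiniteMeasure
  obtain ⟨C, hC⟩ := hdoub.exists_isUniformlyDoubling
  obtain ⟨K, hK⟩ := hP.exists_isQuasiconvex hC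
  have := hK.pathConnectedSpace
  have := hK.locallyPathConnectedSpace
  exact le_antisymm (cap_le_capF hC hP hcov hgen hdeck hμt hp hg)
    (capF_le_cap hcov hgen hdeck hμt (zero_lt_one.trans_le hp))

open Duality in
/-- **Proposition 4.3:** `cap_p T = cap_p^F T`. -/
theorem statement7
    (T : Type) [MetricSpace T] [MeasurableSpace T] [BorelSpace T] [CompactSpace T]
    (Tt : Type) [MetricSpace Tt] [MeasurableSpace Tt] [BorelSpace Tt]
    (μ : Measure T) (μt : Measure Tt) (Cμ : ℝ≥0∞) (CP lP : ℝ)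
    (x₀ : T) (α₀ : Path x₀ x₀) (π : Tt → T) (τ : Tt → Tt)
    (hst : Standing μ Cμ CP lP x₀ α₀)
    (hcov : CoverSetup π) (hdeck : IsDeck π x₀ α₀ τ)
    (hμt : IsLiftedMeasure π μ μt)
    (p : ℝ) (hp : 1 < p) :
    cap μ p x₀ α₀ = capF μ π τ μt p := by
  obtain ⟨hdoub, hP, -, hgen, g, hg⟩ := hst
  exact statement7_general hdoub hP hgen hg hcov hdeck hμt hp.le
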